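/- Let n ≥ 3 be a natural number. The genus-zero Hurwitz number h_{2^1} with one degenerate branch point of reduced ramification type 2^1 (i.e., one permutation of cycle type (3,1^{n-3})) and m = 2n−4 simple branch points satisfies h_{2^1} = (9/2)·((2n−4)!/(n−3)!)·n^{n−5}. Equivalently, the number of tuples (σ, τ_1, …, τ_{2n−4}) of permutations of {1,…,n}, where σ has cycle type (3,1^{n-3}), each τ_i is a transposition, σ·τ_1⋯τ_{2n−4} = id, and the subgroup generated by σ, τ_1, …, τ_{2n−4} acts transitively on {1,…,n}, equals n!·(9/2)·((2n−4)!/(n−3)!)·n^{n−5}. -/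

import Mathlib

open Equiv


/-! ## Part 1: Abel polynomials -/

/-- Abel polynomial attached to a weighted finite set. -/
noncomputable def abelA {ι : Type*} (l : ι → ℝ) (z : ℝ) (S : Finset ι) : ℝ :=
  if S.card = 0 then 1 else z * (z + ∑ i ∈ S, l i) ^ (S.card - 1)

lemma abelA_empty {ι : Type*} (l : ι → ℝ) (z : ℝ) : abelA l z ∅ = 1 := by simp [abelA]

lemma abelA_hasDerivAt {ι : Type*} [DecidableEq ι] (l : ι → ℝ) (S : Finset ι) (z : ℝ) :
    HasDerivAt (fun z => abelA l z S) (∑ s ∈ S, abelA l (z + l s) (S.erase s)) z := by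
  rcases h : S.card with _ | m
  · have : S = ∅ := Finset.card_eq_zero.mp h
    subst this
    simpa [abelA] using hasDerivAt_const z (1:ℝ)
  · have h1 : (fun z => abelA l z S) = fun z => z * (z + ∑ i ∈ S, l i) ^ m := by
      funext z; simp [abelA, h]
    rw [h1]
    have h2 : ∀ s ∈ S, abelA l (z + l s) (S.erase s) =
        if m = 0 then 1 else (z + l s) * (z + ∑ i ∈ S, l i) ^ (m - 1) := by
      intro s hs
      have hc : (S.erase s).card = m := by rw [Finset.card_erase_of_mem hs, h]; rfl
      have hsum : l s + ∑ i ∈ S.erase s, l i = ∑ i ∈ S, l i := Finset.add_sum_erase S l hs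
      simp only [abelA, hc]
      split_ifs
      · rfl
      · rw [← hsum]; ring
    rw [Finset.sum_congr rfl h2]
    rcases m with _ | m
    · refine (hasDerivAt_id' z).congr_deriv ?_ |>.congr_of_eventuallyEq ?_
      · simp [h]
      · simp
    · have h3 : HasDerivAt (fun z : ℝ => z * (z + ∑ i ∈ S, l i) ^ (m+1))
          (1 * (z + ∑ i ∈ S, l i) ^ (m+1) + z * (((m+1:ℕ):ℝ) * (z + ∑ i ∈ S, l i) ^ m * 1)) z := by
        have := ((hasDerivAt_id' z).add_const (∑ i ∈ S, l i)).fun_pow (m+1)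
        exact (hasDerivAt_id' z).fun_mul this
      refine h3.congr_deriv ?_
      symm
      simp only [Nat.add_eq_zero_iff, one_ne_zero, and_false, if_false, Nat.add_sub_cancel]
      rw [← Finset.sum_mul, Finset.sum_add_distrib]
      simp only [Finset.sum_const, h]
      push_cast
      simp only [nsmul_eq_mul]
      push_cast
      ring

lemma abelA_zero {ι : Type*} (l : ι → ℝ) (S : Finset ι) (hS : S ≠ ∅) : abelA l 0 S = 0 := by
  simp [abelA, hS]

lemma abelA_conv {ι : Type*} [DecidableEq ι] (l : ι → ℝ) (U : Finset ι) : ∀ y z : ℝ,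
    ∑ S ∈ U.powerset, abelA l y S * abelA l z (U \ S) = abelA l (y + z) U := by
  induction U using Finset.strongInduction with
  | H U ih =>
  intro y z
  set F : ℝ → ℝ := fun z => ∑ S ∈ U.powerset, abelA l y S * abelA l z (U \ S) - abelA l (y + z) U
    with hF
  have hd : ∀ z, HasDerivAt F 0 z := by
    intro z
    have h1 : HasDerivAt (fun z => ∑ S ∈ U.powerset, abelA l y S * abelA l z (U \ S))
        (∑ S ∈ U.powerset, abelA l y S * ∑ s ∈ U \ S, abelA l (z + l s) ((U \ S).erase s)) z := by
      apply HasDerivAt.fun_sum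
      intro S _
      exact (abelA_hasDerivAt l (U \ S) z).const_mul _
    have h2 : HasDerivAt (fun z => abelA l (y + z) U)
        (∑ s ∈ U, abelA l (y + z + l s) (U.erase s)) z := by
      have := (abelA_hasDerivAt l U (y+z)).comp z ((hasDerivAt_id' z).const_add y)
      refine HasDerivAt.congr_deriv this ?_
      simp
    have h3 := h1.fun_sub h2
    refine h3.congr_deriv ?_
    rw [sub_eq_zero]
    simp_rw [Finset.mul_sum]
    rw [Finset.sum_comm' (t' := U) (s' := fun s => (U.erase s).powerset)]
    · apply Finset.sum_congr rfl
      intro s hs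
      rw [add_assoc, ← ih (U.erase s) (Finset.erase_ssubset hs) y (z + l s)]
      apply Finset.sum_congr rfl
      intro S hS
      congr 2
      ext x; simp; tauto
    · intro S s
      simp only [Finset.mem_powerset, Finset.mem_sdiff, Finset.subset_erase]
      tauto
  have hconst : F z = F 0 :=
    is_const_of_deriv_eq_zero (fun z => (hd z).differentiableAt) (fun z => (hd z).deriv) z 0
  have h0 : F 0 = 0 := by
    simp only [hF, add_zero]
    rw [sub_eq_zero, Finset.sum_eq_single U]
    · simp [abelA_empty]
    · intro S hS hne
      rw [abelA_zero, mul_zero]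
      intro h
      rw [Finset.sdiff_eq_empty_iff_subset] at h
      exact hne (Finset.Subset.antisymm (Finset.mem_powerset.mp hS) h)
    · simp
  have : F z = 0 := by rw [hconst, h0]
  rw [hF] at this
  linarith

/-- The genus zero two-point-like kernel. -/
noncomputable def hk {ι : Type*} (l : ι → ℝ) (a : ℝ) (S : Finset ι) : ℝ :=
  (a + ∑ i ∈ S, l i) ^ ((S.card : ℤ) - 2)

lemma hk_eq {ι : Type*} [DecidableEq ι] (l : ι → ℝ) (a : ℝ) (ha : 0 < a)
    (S : Finset ι) (hl : ∀ i ∈ S, 0 < l i) :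
    hk l a S = abelA l a S / a ^ 2 -
      ∑ r ∈ S, l r / (a * (a + l r)) * abelA l (a + l r) (S.erase r) := by
  have hpos : 0 < a + ∑ i ∈ S, l i := add_pos_of_pos_of_nonneg ha (Finset.sum_nonneg fun i hi => (hl i hi).le)
  set n := a + ∑ i ∈ S, l i with hn
  rcases h : S.card with _ | m
  · have : S = ∅ := Finset.card_eq_zero.mp h
    subst this
    simp at hn
    simp [hk, abelA, zpow_neg]
  · have h2 : ∀ r ∈ S, l r / (a * (a + l r)) * abelA l (a + l r) (S.erase r) =
        l r * (n ^ ((m:ℤ) - 1) / a) := by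
      intro r hr
      have hc : (S.erase r).card = m := by rw [Finset.card_erase_of_mem hr, h]; rfl
      have hsum : l r + ∑ i ∈ S.erase r, l i = ∑ i ∈ S, l i := Finset.add_sum_erase S l hr
      have hr0 := hl r hr
      simp only [abelA, hc]
      rw [add_assoc, hsum, ← hn]
      split_ifs with h0
      · subst h0
        have : S.erase r = ∅ := Finset.card_eq_zero.mp hc
        rw [this] at hsum
        simp at hsum
        have : n = a + l r := by rw [hn, hsum]
        rw [this]
        simp
        field_simp
      · obtain ⟨k, rfl⟩ := Nat.exists_eq_succ_of_ne_zero h0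
        have : ((k.succ : ℕ) : ℤ) - 1 = (k:ℤ) := by push_cast; ring
        rw [this, zpow_natCast]
        simp
        field_simp
    rw [Finset.sum_congr rfl h2, ← Finset.sum_mul]
    have h3 : ∑ i ∈ S, l i = n - a := by rw [hn]; ring
    have h4 : n ^ (m:ℤ) = n ^ ((m:ℤ)-1) * n := by
      rw [← zpow_add_one₀ hpos.ne']; ring_nf
    have h5 : abelA l a S = a * (n ^ ((m:ℤ)-1) * n) := by
      rw [← h4, zpow_natCast]; simp [abelA, h, hn]
    have h6 : hk l a S = n ^ ((m:ℤ)-1) := by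
      simp only [hk, h, ← hn]; congr 1; push_cast; ring
    rw [h5, h6, h3]
    field_simp
    ring

lemma hk_conv {ι : Type*} [DecidableEq ι] (l : ι → ℝ) (a b : ℝ) (ha : 0 < a)
    (hb : 0 < b) (U : Finset ι) (hl : ∀ i ∈ U, 0 < l i) :
    ∑ S ∈ U.powerset, hk l a S * hk l b (U \ S) =
      abelA l (a + b) U / (a ^ 2 * b ^ 2)
      - ∑ r ∈ U, l r * abelA l (a + b + l r) (U.erase r) / (a * b) *
          (1 / (a * (b + l r)) + 1 / (b * (a + l r)))
      + ∑ r ∈ U, ∑ t ∈ U.erase r, l r * l t / (a * b) / ((a + l r) * (b + l t)) *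
          abelA l (a + b + l r + l t) ((U.erase r).erase t) := by
  have e1 : ∑ S ∈ U.powerset, abelA l a S / a ^ 2 * (abelA l b (U \ S) / b^2) =
      abelA l (a + b) U / (a ^ 2 * b ^ 2) := by
    rw [← abelA_conv, Finset.sum_div]
    apply Finset.sum_congr rfl; intros; field_simp
  have e2 : ∑ S ∈ U.powerset, abelA l a S / a ^ 2 *
      (∑ r ∈ U \ S, l r / (b * (b + l r)) * abelA l (b + l r) ((U \ S).erase r)) =
      ∑ r ∈ U, l r * abelA l (a + b + l r) (U.erase r) / (a * b) * (1 / (a * (b + l r))) := by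
    simp_rw [Finset.mul_sum]
    rw [Finset.sum_comm' (t' := U) (s' := fun s => (U.erase s).powerset)]
    · apply Finset.sum_congr rfl
      intro s hs
      rw [add_assoc a b, ← abelA_conv, Finset.mul_sum, Finset.sum_div, Finset.sum_mul]
      apply Finset.sum_congr rfl
      intro S hS
      have : (U \ S).erase s = U.erase s \ S := by ext x; simp; tauto
      rw [this]
      have := hl s hs
      field_simp
    · intro S s
      simp only [Finset.mem_powerset, Finset.mem_sdiff, Finset.subset_erase]
      tauto
  have key : ∀ (Φ : ι → Finset ι → Finset ι → ℝ), 
      ∑ S ∈ U.powerset, ∑ r ∈ S, Φ r (S.erase r) (U \ S) = 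
      ∑ r ∈ U, ∑ S ∈ (U.erase r).powerset, Φ r S (U.erase r \ S) := by
    intro Φ
    rw [Finset.sum_sigma', Finset.sum_sigma']
    refine Finset.sum_bij' (fun x _ => ⟨x.2, x.1.erase x.2⟩) (fun x _ => ⟨insert x.1 x.2, x.1⟩) ?_ ?_ ?_ ?_ ?_
    · rintro ⟨S, r⟩ h
      simp only [Finset.mem_sigma, Finset.mem_powerset] at h ⊢
      exact ⟨h.1 h.2, Finset.erase_subset_erase _ h.1⟩
    · rintro ⟨r, S⟩ h
      simp only [Finset.mem_sigma, Finset.mem_powerset, Finset.subset_erase] at h ⊢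
      exact ⟨Finset.insert_subset h.1 h.2.1, Finset.mem_insert_self _ _⟩
    · rintro ⟨S, r⟩ h
      simp only [Finset.mem_sigma, Finset.mem_powerset] at h ⊢
      simp [Finset.insert_erase h.2]
    · rintro ⟨r, S⟩ h
      simp only [Finset.mem_sigma, Finset.mem_powerset, Finset.subset_erase] at h ⊢
      simp [Finset.erase_insert h.2.2]
    · rintro ⟨S, r⟩ h
      simp only [Finset.mem_sigma, Finset.mem_powerset] at h ⊢
      congr 1
      ext x; simp only [Finset.mem_sdiff, Finset.mem_erase]
      have := h.2
      by_cases hx : x = r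
      · subst hx; tauto
      · tauto
  have e3 : ∑ S ∈ U.powerset, (∑ r ∈ S, l r / (a * (a + l r)) * abelA l (a + l r) (S.erase r)) *
      (abelA l b (U \ S) / b ^ 2) =
      ∑ r ∈ U, l r * abelA l (a + b + l r) (U.erase r) / (a * b) * (1 / (b * (a + l r))) := by
    simp_rw [Finset.sum_mul]
    rw [key (fun r S T => l r / (a * (a + l r)) * abelA l (a + l r) S * (abelA l b T / b ^ 2))]
    apply Finset.sum_congr rfl
    intro s hs
    rw [add_right_comm a b, ← abelA_conv, Finset.mul_sum, Finset.sum_div, Finset.sum_mul]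
    apply Finset.sum_congr rfl
    intro S hS
    have := hl s hs
    field_simp
  have e4 : ∑ S ∈ U.powerset, (∑ r ∈ S, l r / (a * (a + l r)) * abelA l (a + l r) (S.erase r)) *
      (∑ r ∈ U \ S, l r / (b * (b + l r)) * abelA l (b + l r) ((U \ S).erase r)) =
      ∑ r ∈ U, ∑ t ∈ U.erase r, l r * l t / (a * b) / ((a + l r) * (b + l t)) *
          abelA l (a + b + l r + l t) ((U.erase r).erase t) := by
    simp_rw [Finset.sum_mul]
    rw [key (fun r S T => l r / (a * (a + l r)) * abelA l (a + l r) S *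
      (∑ r ∈ T, l r / (b * (b + l r)) * abelA l (b + l r) (T.erase r)))]
    apply Finset.sum_congr rfl
    intro r hr
    simp_rw [Finset.mul_sum]
    rw [Finset.sum_comm' (t' := U.erase r) (s' := fun s => ((U.erase r).erase s).powerset)]
    · apply Finset.sum_congr rfl
      intro s hs
      rw [show a + b + l r + l s = (a + l r) + (b + l s) by ring, ← abelA_conv, Finset.mul_sum]
      apply Finset.sum_congr rfl
      intro S hS
      have : (U.erase r \ S).erase s = (U.erase r).erase s \ S := by ext x; simp; tauto
      rw [this]
      have := hl s (Finset.mem_of_mem_erase hs)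
      have := hl r hr
      field_simp
    · intro S s
      simp only [Finset.mem_powerset, Finset.mem_sdiff, Finset.subset_erase]
      tauto
  have e0 : ∀ S ∈ U.powerset, hk l a S * hk l b (U \ S) = (abelA l a S / a ^ 2 -
      ∑ r ∈ S, l r / (a * (a + l r)) * abelA l (a + l r) (S.erase r)) * (abelA l b (U \ S) / b ^ 2 -
      ∑ r ∈ U \ S, l r / (b * (b + l r)) * abelA l (b + l r) ((U \ S).erase r)) := by
    intro S hS
    rw [hk_eq l a ha S (fun i hi => hl i (Finset.mem_powerset.mp hS hi)),
      hk_eq l b hb (U \ S) (fun i hi => hl i (Finset.mem_sdiff.mp hi).1)]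
  rw [Finset.sum_congr rfl e0]
  simp_rw [sub_mul, mul_sub, Finset.sum_sub_distrib]
  rw [e1, e2, e3, e4]
  simp_rw [mul_add, Finset.sum_add_distrib]
  ring


/-! ## Part 2: Lagrange inversion identities -/

section Lagrange
open PowerSeries

/-- The series `exp (c X)`. -/
noncomputable def eE (c : ℝ) : ℝ⟦X⟧ := rescale c (PowerSeries.exp ℝ)

lemma eE_mul (a b : ℝ) : eE a * eE b = eE (a + b) := exp_mul_exp_eq_exp_add a b

lemma coeff_eE (c : ℝ) (n : ℕ) : coeff n (eE c) = c ^ n / n.factorial := by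
  simp [eE, coeff_rescale, coeff_exp, div_eq_mul_inv]

lemma eE_zero : eE 0 = 1 := by
  ext n; rw [coeff_eE, coeff_one]; rcases n with _ | n <;> simp

lemma derivative_eE (c : ℝ) : d⁄dX ℝ (eE c) = C c * eE c := by
  ext n
  rw [coeff_derivative, coeff_C_mul, coeff_eE, coeff_eE, Nat.factorial_succ, pow_succ]
  push_cast
  field_simp

/-- Lagrange coefficient extraction. -/
noncomputable def lam (n : ℕ) (H : ℝ⟦X⟧) : ℝ := coeff n ((1 - X) * eE n * H)

lemma lam_add (n : ℕ) (H K : ℝ⟦X⟧) : lam n (H + K) = lam n H + lam n K := by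
  simp [lam, mul_add]

lemma lam_sub (n : ℕ) (H K : ℝ⟦X⟧) : lam n (H - K) = lam n H - lam n K := by
  simp [lam, mul_sub]

lemma lam_C_mul (n : ℕ) (c : ℝ) (H : ℝ⟦X⟧) : lam n (C c * H) = c * lam n H := by
  rw [lam, mul_left_comm, coeff_C_mul, lam]

lemma lam_sum {ι : Type*} (n : ℕ) (s : Finset ι) (H : ι → ℝ⟦X⟧) :
    lam n (∑ i ∈ s, H i) = ∑ i ∈ s, lam n (H i) := by
  simp [lam, Finset.mul_sum]

lemma lam_X_pow (n N : ℕ) (h : n < N) (K : ℝ⟦X⟧) : lam n (X ^ N * K) = 0 := by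
  rw [lam, mul_left_comm, coeff_X_pow_mul', if_neg (by omega)]

/-- The inverse of the tree series. -/
noncomputable def uu : ℝ⟦X⟧ := X * eE (-1)

lemma eE_pow (c : ℝ) (j : ℕ) : eE c ^ j = eE (j * c) := by
  induction j with
  | zero => simp [eE_zero]
  | succ j ih => rw [pow_succ, ih, eE_mul]; congr 1; push_cast; ring

lemma uu_pow (j : ℕ) : uu ^ j = X ^ j * eE (-j) := by
  rw [uu, mul_pow, eE_pow]; congr 2; ring

lemma coeff_one_sub_X_mul (n : ℕ) (H : ℝ⟦X⟧) :
    coeff (n + 1) ((1 - X) * H) = coeff (n + 1) H - coeff n H := by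
  rw [sub_mul, one_mul, map_sub, coeff_succ_X_mul]

lemma coeff_zero_one_sub_X_mul (H : ℝ⟦X⟧) :
    coeff 0 ((1 - X) * H) = coeff 0 H := by
  rw [sub_mul, one_mul, map_sub, coeff_zero_X_mul, sub_zero]

lemma lam_uu_pow (n j : ℕ) : lam n (uu ^ j) = if n = j then 1 else 0 := by
  rw [lam, uu_pow]
  have : (1 - X) * eE n * (X ^ j * eE (-j)) = X ^ j * ((1 - X) * eE ((n:ℝ) - j)) := by
    rw [sub_eq_add_neg (n:ℝ), ← eE_mul]; ring
  rw [this, coeff_X_pow_mul']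
  split_ifs with h1 h2 h2
  · subst h2; simp [eE_zero]
  · obtain ⟨d, rfl⟩ : ∃ d, n = j + (d + 1) := ⟨n - j - 1, by omega⟩
    rw [Nat.add_sub_cancel_left, coeff_one_sub_X_mul, coeff_eE, coeff_eE, Nat.factorial_succ]
    push_cast
    field_simp
    ring
  · omega
  · rfl

lemma lam_expand (H : ℝ⟦X⟧) (N : ℕ) :
    ∃ K, H = ∑ j ∈ Finset.range N, C (lam j H) * uu ^ j + X ^ N * K := by
  induction N with
  | zero => exact ⟨H, by simp⟩
  | succ N ih =>
    obtain ⟨K, hK⟩ := ih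
    set c := constantCoeff K with hc
    have h1 : X ∣ K - C c * eE (-N) := by
      rw [X_dvd_iff, map_sub, map_mul, ← hc]
      have : constantCoeff (eE (-(N:ℝ))) = 1 := by
        rw [← coeff_zero_eq_constantCoeff_apply, coeff_eE]; simp
      rw [this]; simp
    obtain ⟨K', hK'⟩ := h1
    have h2 : X ^ N * K = C c * uu ^ N + X ^ (N + 1) * K' := by
      rw [uu_pow, pow_succ, mul_assoc (X ^ N), ← hK']; ring
    have h3 : lam N H = c := by
      conv_lhs => rw [hK, h2]
      rw [lam_add, lam_add, lam_sum, lam_X_pow N (N+1) (by omega), lam_C_mul, lam_uu_pow]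
      rw [Finset.sum_eq_zero]
      · simp
      · intro j hj
        rw [lam_C_mul, lam_uu_pow, if_neg (by have := Finset.mem_range.mp hj; omega), mul_zero]
    refine ⟨K', ?_⟩
    rw [Finset.sum_range_succ, h3, add_assoc, ← h2]
    exact hK

lemma lam_mul (n : ℕ) (H K : ℝ⟦X⟧) :
    lam n (H * K) = ∑ p ∈ Finset.HasAntidiagonal.antidiagonal n, lam p.1 H * lam p.2 K := by
  obtain ⟨H', hH⟩ := lam_expand H (n + 1)
  obtain ⟨K', hK⟩ := lam_expand K (n + 1)
  set A := ∑ j ∈ Finset.range (n+1), C (lam j H) * uu ^ j with hA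
  set B := ∑ j ∈ Finset.range (n+1), C (lam j K) * uu ^ j with hB
  have h1 : H * K = A * B + X ^ (n + 1) * (H' * B + A * K' + X ^ (n+1) * H' * K') := by
    rw [hH, hK]; ring
  rw [h1, lam_add, lam_X_pow n (n+1) (by omega), add_zero, hA, hB, Finset.sum_mul_sum, lam_sum]
  simp_rw [lam_sum]
  have h2 : ∀ i j : ℕ, lam n (C (lam i H) * uu ^ i * (C (lam j K) * uu ^ j)) =
      if n = i + j then lam i H * lam j K else 0 := by
    intro i j
    rw [show C (lam i H) * uu ^ i * (C (lam j K) * uu ^ j) =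
      C (lam i H) * (C (lam j K) * uu ^ (i + j)) by rw [pow_add]; ring, lam_C_mul, lam_C_mul, lam_uu_pow]
    split_ifs <;> ring
  simp_rw [h2]
  rw [← Finset.sum_product', ← Finset.sum_filter]
  apply Finset.sum_congr _ (fun _ _ => rfl)
  ext ⟨i, j⟩
  simp
  omega

lemma lam_deriv (m : ℕ) (H : ℝ⟦X⟧) :
    ((m + 1 : ℕ) : ℝ) * lam (m + 1) H = coeff m (eE ((m + 1 : ℕ) : ℝ) * d⁄dX ℝ H) := by
  have h1 := coeff_derivative (eE ((m + 1 : ℕ) : ℝ) * H) m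
  rw [Derivation.leibniz, derivative_eE] at h1
  simp only [smul_eq_mul, map_add] at h1
  rw [mul_left_comm, coeff_C_mul, mul_comm H] at h1
  rw [lam, mul_assoc, coeff_one_sub_X_mul]
  push_cast at h1 ⊢
  linear_combination -h1

/-- `a^a / a!`, set to zero at `a = 0`. -/
noncomputable def gg (a : ℕ) : ℝ := if a = 0 then 0 else (a:ℝ) ^ a / a.factorial

lemma gg_succ (a : ℕ) : gg (a + 1) = ((a + 1 : ℕ) : ℝ) ^ a / a.factorial := by
  rw [gg, if_neg (by omega), Nat.factorial_succ]
  push_cast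
  rw [pow_succ]
  field_simp

lemma gg_pos (a : ℕ) (h : 0 < a) : 0 < gg a := by
  rw [gg, if_neg (by omega)]; positivity

/-- the constant `1 / (a g(a))`. -/
noncomputable def cc (a : ℕ) : ℝ := 1 / (a * gg a)

lemma lam_zero (H : ℝ⟦X⟧) : lam 0 H = coeff 0 H := by
  rw [lam, mul_assoc, coeff_zero_one_sub_X_mul]; simp [eE_zero]

lemma lam_X (m : ℕ) : lam m X = gg m / m := by
  rcases m with _ | m
  · simp [lam_zero]
  · have := lam_deriv m X
    rw [derivative_X, mul_one, coeff_eE, ← gg_succ] at this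
    field_simp
    linear_combination this

/-- truncated exponential -/
noncomputable def tE (r : ℕ) : Polynomial ℝ :=
  ∑ j ∈ Finset.range (r + 1), Polynomial.monomial j ((r:ℝ) ^ j / j.factorial)

lemma coeff_tE (r j : ℕ) : (tE r).coeff j = if j ≤ r then (r:ℝ) ^ j / j.factorial else 0 := by
  simp [tE, Polynomial.coeff_monomial, Nat.lt_succ_iff]

noncomputable def vV (r : ℕ) : ℝ⟦X⟧ := C (cc r) * (eE (-r) * (tE r : ℝ⟦X⟧))

noncomputable def wW (r : ℕ) : ℝ⟦X⟧ := C (cc r) - vV r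

lemma derivative_wW (r : ℕ) (hr : 0 < r) : d⁄dX ℝ (wW r) = X ^ r * eE (-r) := by
  have h1 : d⁄dX ℝ (tE r : ℝ⟦X⟧) = C (r:ℝ) * ((tE r : ℝ⟦X⟧) - C (gg r) * X ^ r) := by
    ext m
    rw [coeff_derivative, coeff_C_mul, map_sub, coeff_C_mul, Polynomial.coeff_coe, Polynomial.coeff_coe,
      coeff_X_pow, coeff_tE, coeff_tE]
    rcases lt_trichotomy m r with h | h | h
    · rw [if_pos (by omega), if_pos (by omega), if_neg (by omega), Nat.factorial_succ]
      push_cast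
      field_simp
      ring
    · subst h
      simp [gg, hr.ne']
    · rw [if_neg (by omega), if_neg (by omega), if_neg (by omega)]; simp
  have h2 : (C (cc r) : ℝ⟦X⟧) * C (r:ℝ) * C (gg r) = 1 := by
    rw [← map_mul, ← map_mul, cc]
    have := gg_pos r hr
    rw [show 1 / ((r:ℝ) * gg r) * r * gg r = 1 by field_simp]; simp
  rw [wW, vV, map_sub, derivative_C, Derivation.leibniz, Derivation.leibniz, h1, derivative_eE, derivative_C]
  simp only [smul_eq_mul, map_neg]
  linear_combination (X ^ r * eE (-r)) * h2

lemma lam_wW (r : ℕ) (hr : 0 < r) (m : ℕ) : lam m (wW r) = if m ≤ r then 0 else gg (m - r) / m := by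
  rcases m with _ | m
  · rw [lam_zero, if_pos (by omega), wW, vV, map_sub, coeff_C_mul, coeff_mul, coeff_zero_C, Finset.Nat.antidiagonal_zero, Finset.sum_singleton,
      Polynomial.coeff_coe, coeff_tE, coeff_eE]
    simp
  · have := lam_deriv m (wW r)
    rw [derivative_wW r hr, mul_left_comm, eE_mul, coeff_X_pow_mul'] at this
    split_ifs with h
    · rw [if_neg (by omega)] at this
      have h0 : ((m+1:ℕ):ℝ) ≠ 0 := by positivity
      exact (mul_eq_zero.mp this).resolve_left h0
    · rw [if_pos (by omega), coeff_eE] at this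
      obtain ⟨d, rfl⟩ : ∃ d, m = r + d := ⟨m - r, by omega⟩
      rw [show r + d + 1 - r = d + 1 by omega, gg_succ]
      rw [show r + d - r = d by omega, show (((r + d + 1:ℕ):ℝ) + -(r:ℝ)) = ((d+1:ℕ):ℝ) by push_cast; ring] at this
      rw [← this]
      field_simp

lemma lam_eE_poly (n : ℕ) (p : ℝ⟦X⟧) :
    lam (n + 1) (eE (-((n + 1 : ℕ) : ℝ)) * p) = coeff (n + 1) p - coeff n p := by
  rw [lam, mul_assoc, ← mul_assoc (eE _), eE_mul, add_neg_cancel, eE_zero, one_mul, coeff_one_sub_X_mul]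

lemma tE_natDegree (r : ℕ) : (tE r).natDegree ≤ r := by
  rw [Polynomial.natDegree_le_iff_coeff_eq_zero]
  intro N hN
  rw [coeff_tE, if_neg (by omega)]

lemma tE_reflect (r : ℕ) (hr : 0 < r) : (Polynomial.reflect r (tE r)).coeff 0 = gg r ∧
    (Polynomial.reflect r (tE r)).coeff 1 = gg r ∧
    (Polynomial.reflect r (tE r)).coeff 2 = gg r * (1 - 1 / r) := by
  refine ⟨?_, ?_, ?_⟩
  · rw [Polynomial.coeff_reflect, Polynomial.revAt_le (by omega), coeff_tE]
    simp [gg, hr.ne']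
  · rw [Polynomial.coeff_reflect, Polynomial.revAt_le (by omega), coeff_tE]
    obtain ⟨d, rfl⟩ : ∃ d, r = d + 1 := ⟨r - 1, by omega⟩
    simp [gg_succ]
  · rw [Polynomial.coeff_reflect]
    rcases (by omega : r = 1 ∨ 2 ≤ r) with rfl | h
    · rw [Polynomial.revAt_eq_self_of_lt (by omega), coeff_tE]
      simp
    · rw [Polynomial.revAt_le (by omega), coeff_tE]
      obtain ⟨d, rfl⟩ : ∃ d, r = d + 1 + 1 := ⟨r - 2, by omega⟩
      rw [if_pos (by omega), gg_succ, show d + 1 + 1 - 2 = d by omega, Nat.factorial_succ]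
      push_cast
      have : (d:ℝ) + 1 + 1 ≠ 0 := by positivity
      rw [pow_succ]
      field_simp
      ring

lemma identP (k : ℕ) (hk : 0 < k) :
    ∑ p ∈ Finset.HasAntidiagonal.antidiagonal k, gg p.1 / p.1 * (gg p.2 / p.2) = 2 * gg k * (k - 1) / k ^ 2 := by
  have h := lam_mul k X X
  simp_rw [lam_X] at h
  rw [← h]
  obtain ⟨m, rfl⟩ : ∃ d, k = d + 1 := ⟨k - 1, by omega⟩
  have := lam_deriv m (X * X)
  rw [Derivation.leibniz, derivative_X] at this
  simp only [smul_eq_mul, mul_one] at this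
  rw [← two_mul, mul_left_comm, show (2:ℝ⟦X⟧) = C (2:ℝ) from (map_ofNat C 2).symm, coeff_C_mul, mul_comm (eE _) X] at this
  rcases m with _ | d
  · simp at this ⊢; simpa using this
  · rw [coeff_succ_X_mul, coeff_eE] at this
    rw [gg_succ, Nat.factorial_succ]
    have h0 : ((d + 1 + 1 : ℕ):ℝ) ≠ 0 := by positivity
    rw [eq_div_iff (by positivity)]
    have e : lam (d + 1 + 1) (X * X) * ((d + 1 + 1 : ℕ):ℝ) ^ 2 =
      (((d + 1 + 1 : ℕ):ℝ) * lam (d + 1 + 1) (X * X)) * ((d + 1 + 1 : ℕ):ℝ) := by ring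
    rw [e, this, pow_succ]
    push_cast
    field_simp
    ring

noncomputable def Qs (k r : ℕ) : ℝ :=
  ∑ p ∈ Finset.HasAntidiagonal.antidiagonal k, gg p.1 / p.1 * (gg p.2 / (p.2 + r))

noncomputable def Rs (k r t : ℕ) : ℝ :=
  ∑ p ∈ Finset.HasAntidiagonal.antidiagonal k, gg p.1 / (p.1 + r) * (gg p.2 / (p.2 + t))

lemma lam_X_wW (k r : ℕ) (hr : 0 < r) : lam (k + r) (X * wW r) = Qs k r := by
  rw [lam_mul, Qs]
  symm
  apply Finset.sum_bij_ne_zero (fun p _ _ => (p.1, p.2 + r))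
  · intro p hp _; simp at hp ⊢; omega
  · rintro ⟨a, b⟩ _ _ ⟨c, d⟩ _ _ h; simp at h ⊢; exact h
  · rintro ⟨a, b⟩ hp hne
    simp only [lam_wW r hr] at hne
    split_ifs at hne with hb
    · simp at hne
    · refine ⟨(a, b - r), by simp at hp ⊢; omega, ?_, by simp; omega⟩
      rw [lam_X] at hne
      have : (b:ℝ) = ((b - r : ℕ):ℝ) + r := by rw [Nat.cast_sub (by omega)]; ring
      rwa [this] at hne
  · rintro ⟨a, b⟩ hp hne
    have hb : b ≠ 0 := by rintro rfl; simp [gg] at hne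
    rw [lam_X, lam_wW r hr, if_neg (by simp; omega)]
    simp

lemma lam_wW_wW (k r t : ℕ) (hr : 0 < r) (ht : 0 < t) :
    lam (k + r + t) (wW r * wW t) = Rs k r t := by
  rw [lam_mul, Rs]
  symm
  apply Finset.sum_bij_ne_zero (fun p _ _ => (p.1 + r, p.2 + t))
  · intro p hp _; simp at hp ⊢; omega
  · rintro ⟨a, b⟩ _ _ ⟨c, d⟩ _ _ h; simp at h ⊢; exact h
  · rintro ⟨a, b⟩ hp hne
    simp only [lam_wW r hr, lam_wW t ht] at hne
    split_ifs at hne with ha hb hb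
    · simp at hne
    · simp at hne
    · simp at hne
    · refine ⟨(a - r, b - t), by simp at hp ⊢; omega, ?_, by simp; omega⟩
      have h1 : (b:ℝ) = ((b - t : ℕ):ℝ) + t := by rw [Nat.cast_sub (by omega)]; ring
      have h2 : (a:ℝ) = ((a - r : ℕ):ℝ) + r := by rw [Nat.cast_sub (by omega)]; ring
      rwa [h1, h2] at hne
  · rintro ⟨a, b⟩ hp hne
    have hb : b ≠ 0 := by rintro rfl; simp [gg] at hne
    have ha : a ≠ 0 := by rintro rfl; simp [gg] at hne
    rw [lam_wW r hr, if_neg (by simp; omega), lam_wW t ht, if_neg (by simp; omega)]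
    simp

lemma lam_wW_wW_zero (m r t : ℕ) (hr : 0 < r) (ht : 0 < t) (h : m ≤ r + t) :
    lam m (wW r * wW t) = 0 := by
  rw [lam_mul]
  apply Finset.sum_eq_zero
  rintro ⟨a, b⟩ hp
  simp only [lam_wW r hr, lam_wW t ht]
  simp at hp
  split_ifs <;> first | omega | simp

lemma vV_eq (r : ℕ) : vV r = C (cc r) - wW r := by rw [wW]; ring

lemma identQ (k r : ℕ) (hk : 0 < k) (hr : 0 < r) :
    cc k * Qs k r + cc r * Qs r k =
      cc k * cc r * (gg (k + r) / (k + r)) - 1 / (k * r) * (1 / k + 1 / r - 1) := by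
  have h1 : lam (k + r) (X * (vV k * vV r)) =
      cc k * cc r * (gg (k + r) / (k + r)) - cc k * Qs k r - cc r * Qs r k := by
    rw [vV_eq, vV_eq, show X * ((C (cc k) - wW k) * (C (cc r) - wW r)) =
      C (cc k) * (C (cc r) * X) - C (cc k) * (X * wW r) - C (cc r) * (X * wW k) + (wW k * wW r) * X by ring,
      lam_add, lam_sub, lam_sub, lam_C_mul, lam_C_mul, lam_C_mul, lam_C_mul, lam_X, lam_X_wW k r hr,
      add_comm k r, lam_X_wW r k hk, lam_mul, Finset.sum_eq_zero]
    · push_cast; ring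
    · rintro ⟨a, b⟩ hp
      simp at hp
      simp only
      rw [lam_wW_wW_zero a k r hk hr (by omega), zero_mul]
  have h2 : lam (k + r) (X * (vV k * vV r)) = 1 / (k * r) * (1 / k + 1 / r - 1) := by
    obtain ⟨n, hn⟩ : ∃ n, k + r = n + 1 + 1 := ⟨k + r - 2, by omega⟩
    have e : X * (vV k * vV r) = C (cc k) * (C (cc r) * (eE (-((n + 1 + 1 : ℕ):ℝ)) *
        (X * ((tE k * tE r : Polynomial ℝ) : ℝ⟦X⟧)))) := by
      rw [← hn, vV, vV, show (-((k + r : ℕ):ℝ)) = -k + -r by push_cast; ring, ← eE_mul, Polynomial.coe_mul]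
      ring
    rw [e, lam_C_mul, lam_C_mul, hn, lam_eE_poly, coeff_succ_X_mul, coeff_succ_X_mul,
      Polynomial.coeff_coe, Polynomial.coeff_coe]
    have e1 : (tE k * tE r).coeff (n + 1) = (Polynomial.reflect (k + r) (tE k * tE r)).coeff 1 := by
      rw [Polynomial.coeff_reflect, Polynomial.revAt_le (by omega), hn]; rfl
    have e2 : (tE k * tE r).coeff n = (Polynomial.reflect (k + r) (tE k * tE r)).coeff 2 := by
      rw [Polynomial.coeff_reflect, Polynomial.revAt_le (by omega), hn]; rfl
    obtain ⟨a0, a1, a2⟩ := tE_reflect k hk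
    obtain ⟨b0, b1, b2⟩ := tE_reflect r hr
    rw [e1, e2, Polynomial.reflect_mul _ _ (tE_natDegree k) (tE_natDegree r), Polynomial.coeff_mul,
      Polynomial.coeff_mul]
    simp only [Finset.Nat.antidiagonal_succ, Finset.Nat.antidiagonal_zero, Finset.sum_cons, Finset.map_singleton,
      Finset.map_cons, Finset.sum_singleton]
    simp [a0, a1, a2, b0, b1, b2, cc]
    have := gg_pos k hk
    have := gg_pos r hr
    field_simp
    ring
  rw [h2] at h1
  linarith

lemma identR (k r t : ℕ) (hk : 0 < k) (hr : 0 < r) (ht : 0 < t) :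
    cc k * Rs k r t + cc r * Rs r k t + cc t * Rs t k r =
      -2 / (k * r * t) + 1 / (k + r + t) * (cc k * cc r * gg (k + r) + cc k * cc t * gg (k + t)
        + cc r * cc t * gg (r + t)) := by
  have h1 : lam (k + r + t) (vV k * vV r * vV t) =
      cc k * Rs k r t + cc r * Rs r k t + cc t * Rs t k r - 1 / (k + r + t) *
      (cc k * cc r * gg (k + r) + cc k * cc t * gg (k + t) + cc r * cc t * gg (r + t)) := by
    have z1 : lam (k + r + t) (C (cc k * cc r * cc t)) = 0 := by
      obtain ⟨m, hm⟩ : ∃ m, k + r + t = m + 1 := ⟨k + r + t - 1, by omega⟩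
      have := lam_deriv m (C (cc k * cc r * cc t))
      rw [derivative_C, mul_zero, map_zero, ← hm] at this
      exact (mul_eq_zero.mp this).resolve_left (by positivity)
    have z2 : lam (k + r + t) (wW k * wW r * wW t) = 0 := by
      rw [lam_mul]
      apply Finset.sum_eq_zero
      rintro ⟨a, b⟩ hp
      simp at hp
      simp only
      by_cases hb : b ≤ t
      · rw [lam_wW t ht, if_pos hb, mul_zero]
      · rw [lam_wW_wW_zero a k r hk hr (by omega), zero_mul]
    have z3 : lam (k + r + t) (wW k * wW t) = Rs r k t := by
      rw [← lam_wW_wW r k t hk ht, add_comm r k]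
    have z4 : lam (k + r + t) (wW k * wW r) = Rs t k r := by
      rw [← lam_wW_wW t k r hk hr, show t + k + r = k + r + t by ring]
    rw [vV_eq, vV_eq, vV_eq, show (C (cc k) - wW k) * (C (cc r) - wW r) * (C (cc t) - wW t) =
      C (cc k * cc r * cc t) + C (cc k) * (wW r * wW t) + C (cc r) * (wW k * wW t)
       + C (cc t) * (wW k * wW r)
      - C (cc k * cc r) * wW t - C (cc k * cc t) * wW r - C (cc r * cc t) * wW k
      - wW k * wW r * wW t by simp only [map_mul]; ring]
    simp only [lam_sub, lam_add, lam_C_mul, z1, z2, z3, z4, lam_wW_wW k r t hr ht, lam_wW k hk, lam_wW r hr, lam_wW t ht]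
    rw [if_neg (by omega), if_neg (by omega), if_neg (by omega), show k + r + t - t = k + r by omega,
      show k + r + t - r = k + t by omega, show k + r + t - k = r + t by omega]
    push_cast
    ring
  have h2 : lam (k + r + t) (vV k * vV r * vV t) = -2 / (k * r * t) := by
    obtain ⟨n, hn⟩ : ∃ n, k + r + t = n + 1 := ⟨k + r + t - 1, by omega⟩
    have e : vV k * vV r * vV t = C (cc k) * (C (cc r) * (C (cc t) * (eE (-((n + 1 : ℕ):ℝ)) *
        ((tE k * tE r * tE t : Polynomial ℝ) : ℝ⟦X⟧)))) := by
      rw [← hn, vV, vV, vV, show (-((k + r + t : ℕ):ℝ)) = -k + -r + -t by push_cast; ring, ← eE_mul, ← eE_mul,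
        Polynomial.coe_mul, Polynomial.coe_mul]
      ring
    rw [e, lam_C_mul, lam_C_mul, lam_C_mul, hn, lam_eE_poly, Polynomial.coeff_coe, Polynomial.coeff_coe]
    have e1 : (tE k * tE r * tE t).coeff (n + 1) =
        (Polynomial.reflect (k + r + t) (tE k * tE r * tE t)).coeff 0 := by
      rw [Polynomial.coeff_reflect, Polynomial.revAt_le (by omega), hn]; rfl
    have e2 : (tE k * tE r * tE t).coeff n =
        (Polynomial.reflect (k + r + t) (tE k * tE r * tE t)).coeff 1 := by
      rw [Polynomial.coeff_reflect, Polynomial.revAt_le (by omega), hn]; rfl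
    obtain ⟨a0, a1, -⟩ := tE_reflect k hk
    obtain ⟨b0, b1, -⟩ := tE_reflect r hr
    obtain ⟨c0, c1, -⟩ := tE_reflect t ht
    have hd : (tE k * tE r).natDegree ≤ k + r :=
      Polynomial.natDegree_mul_le_of_le (tE_natDegree k) (tE_natDegree r)
    rw [e1, e2, Polynomial.reflect_mul _ _ hd (tE_natDegree t),
      Polynomial.reflect_mul _ _ (tE_natDegree k) (tE_natDegree r)]
    simp only [Polynomial.mul_coeff_zero, Polynomial.mul_coeff_one, a0, a1, b0, b1, c0, c1, cc]
    have := gg_pos k hk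
    have := gg_pos r hr
    have := gg_pos t ht
    field_simp
    ring
  rw [h2] at h1
  linarith

end Lagrange


/-! ## Part 3: the master identity -/

lemma abelA_zpow {ι : Type*} (l : ι → ℝ) (z : ℝ) (hz : z ≠ 0) (S : Finset ι) :
    abelA l z S = z * (z + ∑ i ∈ S, l i) ^ ((S.card : ℤ) - 1) := by
  rcases h : S.card with _ | m
  · have : S = ∅ := Finset.card_eq_zero.mp h
    subst this
    simp [abelA, hz]
  · simp [abelA, h]

noncomputable def ff (a : ℕ) : ℝ := a * gg a

lemma Qs_swap (k r : ℕ) :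
    ∑ p ∈ Finset.HasAntidiagonal.antidiagonal k, gg p.1 / (p.1 + r) * (gg p.2 / p.2) = Qs k r := by
  rw [Qs, ← Finset.Nat.sum_antidiagonal_swap]
  apply Finset.sum_congr rfl
  intro p _
  simp [mul_comm]

lemma hz_inner_sum {ι : Type*} [DecidableEq ι] (L : ι → ℕ) (U : Finset ι) (k : ℕ) (hk0 : 0 < k)
    (hL : ∀ i ∈ U, 0 < L i) (n : ℝ) (hn : n = k + ∑ i ∈ U, (L i : ℝ)) :
    ∑ p ∈ Finset.HasAntidiagonal.antidiagonal k, ff p.1 * ff p.2 *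
      ∑ S ∈ U.powerset, hk (fun i => (L i : ℝ)) p.1 S * hk (fun i => (L i : ℝ)) p.2 (U \ S) =
    n ^ ((U.card : ℤ) - 3) * (k * n ^ 2 * (2 * gg k * (k - 1) / k ^ 2)
      - 2 * n * ∑ r ∈ U, L r * (k + L r) * Qs k (L r)
      + ∑ r ∈ U, ∑ t ∈ U.erase r, L r * L t * (k + L r + L t) * Rs k (L r) (L t)) := by
  have hnpos : 0 < n := by rw [hn]; positivity
  have hkr : (0:ℝ) < k := by exact_mod_cast hk0
  set l : ι → ℝ := fun i => (L i : ℝ) with hl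
  have hlp : ∀ i ∈ U, 0 < l i := fun i hi => by simpa [hl] using hL i hi
  have z1 : n ^ ((U.card:ℤ) - 1) = n ^ ((U.card:ℤ) - 3) * n ^ 2 := by
    rw [← zpow_natCast, ← zpow_add₀ hnpos.ne']; congr 1; push_cast; ring
  have z2 : n ^ ((U.card:ℤ) - 2) = n ^ ((U.card:ℤ) - 3) * n := by
    rw [← zpow_add_one₀ hnpos.ne']; congr 1; ring
  have A1 : abelA l k U = k * n ^ 2 * n ^ ((U.card:ℤ) - 3) := by
    rw [abelA_zpow l k hkr.ne', ← hn, z1]; ring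
  have A2 : ∀ r ∈ U, abelA l (k + l r) (U.erase r) = (k + l r) * n * n ^ ((U.card:ℤ) - 3) := by
    intro r hr
    have := hlp r hr
    rw [abelA_zpow l _ (by positivity), add_assoc, Finset.add_sum_erase U l hr, ← hn,
      Finset.card_erase_of_mem hr, Nat.cast_sub (Finset.card_pos.mpr ⟨r, hr⟩)]
    rw [show ((U.card:ℤ) - (1:ℕ) - 1) = (U.card:ℤ) - 2 by push_cast; ring, z2]; ring
  have A3 : ∀ r ∈ U, ∀ t ∈ U.erase r, abelA l (k + l r + l t) ((U.erase r).erase t) =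
      (k + l r + l t) * n ^ ((U.card:ℤ) - 3) := by
    intro r hr t ht
    have := hlp r hr
    have := hlp t (Finset.mem_of_mem_erase ht)
    have hc : (U.erase r).card = U.card - 1 := Finset.card_erase_of_mem hr
    have hc1 : 0 < (U.erase r).card := Finset.card_pos.mpr ⟨t, ht⟩
    have hs : k + l r + l t + ∑ i ∈ (U.erase r).erase t, l i = n := by
      rw [hn, ← Finset.add_sum_erase U l hr, ← Finset.add_sum_erase _ l ht]; ring
    rw [abelA_zpow l _ (by positivity), hs,
      Finset.card_erase_of_mem ht, hc, Nat.cast_sub (by omega), Nat.cast_sub (by omega)]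
    rw [show ((U.card:ℤ) - (1:ℕ) - (1:ℕ) - 1) = (U.card:ℤ) - 3 by push_cast; ring]
  set N := n ^ ((U.card:ℤ) - 3) with hN
  have step : ∀ p ∈ Finset.HasAntidiagonal.antidiagonal k, ff p.1 * ff p.2 *
      ∑ S ∈ U.powerset, hk l p.1 S * hk l p.2 (U \ S) =
      N * (k * n ^ 2 * (gg p.1 / p.1 * (gg p.2 / p.2))
        - n * ∑ r ∈ U, L r * (k + L r) * (gg p.1 / p.1 * (gg p.2 / (p.2 + L r)) +
            gg p.1 / (p.1 + L r) * (gg p.2 / p.2))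
        + ∑ r ∈ U, ∑ t ∈ U.erase r, L r * L t * (k + L r + L t) *
            (gg p.1 / (p.1 + L r) * (gg p.2 / (p.2 + L t)))) := by
    rintro ⟨a, b⟩ hp
    simp at hp
    by_cases ha : a = 0
    · subst ha; simp [ff, gg]
    by_cases hb : b = 0
    · subst hb; simp [ff, gg]
    have ha' : (0:ℝ) < a := by positivity
    have hb' : (0:ℝ) < b := by positivity
    have hab : (a:ℝ) + b = k := by rw [← hp]; push_cast; ring
    simp only
    rw [hk_conv l a b ha' hb' U hlp, hab, A1]
    have s2 : ∑ r ∈ U, l r * abelA l (k + l r) (U.erase r) / (a * b) *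
          (1 / (a * (b + l r)) + 1 / (b * (a + l r))) =
        ∑ r ∈ U, N * n / (a * b) * (L r * (k + L r) * (1 / (a * (b + L r)) + 1 / (b * (a + L r)))) := by
      apply Finset.sum_congr rfl
      intro r hr
      rw [A2 r hr]
      simp only [hl]
      ring
    have s3 : ∑ r ∈ U, ∑ t ∈ U.erase r, l r * l t / (a * b) / ((a + l r) * (b + l t)) *
          abelA l (k + l r + l t) ((U.erase r).erase t) =
        ∑ r ∈ U, ∑ t ∈ U.erase r, N / (a * b) * (L r * L t * (k + L r + L t) / ((a + L r) * (b + L t))) := by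
      apply Finset.sum_congr rfl
      intro r hr
      apply Finset.sum_congr rfl
      intro t ht
      rw [A3 r hr t ht]
      simp only [hl]
      ring
    rw [s2, s3, mul_add, mul_sub, mul_add N, mul_sub N]
    congr 1
    · congr 1
      · simp only [ff]; field_simp
      · rw [Finset.mul_sum, Finset.mul_sum, Finset.mul_sum]
        apply Finset.sum_congr rfl
        intro r hr
        simp only [ff]; field_simp
    · rw [Finset.mul_sum, Finset.mul_sum]
      apply Finset.sum_congr rfl
      intro r hr
      rw [Finset.mul_sum, Finset.mul_sum]
      apply Finset.sum_congr rfl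
      intro t ht
      simp only [ff]; field_simp
  rw [Finset.sum_congr rfl step, ← Finset.mul_sum, Finset.sum_add_distrib, Finset.sum_sub_distrib,
    ← Finset.mul_sum, identP k hk0, ← Finset.mul_sum]
  congr 2
  · congr 1
    have : ∀ r ∈ U, ∑ p ∈ Finset.HasAntidiagonal.antidiagonal k,
        ((L r : ℝ) * (k + L r) * (gg p.1 / p.1 * (gg p.2 / (p.2 + L r)) +
            gg p.1 / (p.1 + L r) * (gg p.2 / p.2))) = 2 * (L r * (k + L r) * Qs k (L r)) := by
      intro r hr
      rw [← Finset.mul_sum, Finset.sum_add_distrib, Qs_swap, ← Qs]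
      ring
    rw [Finset.sum_comm, Finset.sum_congr rfl this, ← Finset.mul_sum]
    ring
  · rw [Finset.sum_comm]
    apply Finset.sum_congr rfl
    intro r hr
    rw [Finset.sum_comm]
    apply Finset.sum_congr rfl
    intro t ht
    rw [← Finset.mul_sum, ← Rs]

lemma sym2 {ι : Type*} [DecidableEq ι] (I : Finset ι) (F : ι → ι → ℝ) :
    ∑ i ∈ I, ∑ j ∈ I.erase i, F i j = ∑ i ∈ I, ∑ j ∈ I.erase i, F j i := by
  rw [Finset.sum_comm' (t' := I) (s' := fun j => I.erase j)]
  intro x y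
  simp only [Finset.mem_erase]
  tauto

lemma sym3a {ι : Type*} [DecidableEq ι] (I : Finset ι) (F : ι → ι → ι → ℝ) :
    ∑ i ∈ I, ∑ r ∈ I.erase i, ∑ t ∈ (I.erase i).erase r, F i r t =
    ∑ i ∈ I, ∑ r ∈ I.erase i, ∑ t ∈ (I.erase i).erase r, F r i t := by
  rw [sym2 I (fun i r => ∑ t ∈ (I.erase i).erase r, F i r t)]
  simp_rw [Finset.erase_right_comm]

lemma sym3b {ι : Type*} [DecidableEq ι] (I : Finset ι) (F : ι → ι → ι → ℝ) :
    ∑ i ∈ I, ∑ r ∈ I.erase i, ∑ t ∈ (I.erase i).erase r, F i r t =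
    ∑ i ∈ I, ∑ r ∈ I.erase i, ∑ t ∈ (I.erase i).erase r, F i t r := by
  apply Finset.sum_congr rfl
  intro i _
  rw [sym2 (I.erase i)]

lemma master {ι : Type*} [DecidableEq ι] (L : ι → ℕ) (I : Finset ι) (hI : I.Nonempty)
    (hL : ∀ i ∈ I, 0 < L i) (n : ℝ) (hn : n = ∑ i ∈ I, (L i : ℝ)) :
    2 * (n + I.card - 2) * n ^ ((I.card : ℤ) - 3) =
    ∑ i ∈ I, ∑ j ∈ I.erase i, (L i * L j : ℝ) * (ff (L i + L j) / (ff (L i) * ff (L j))) * n ^ ((I.card : ℤ) - 4)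
    + ∑ i ∈ I, (L i : ℝ) / ff (L i) * ∑ p ∈ Finset.HasAntidiagonal.antidiagonal (L i), ff p.1 * ff p.2 *
      ∑ S ∈ (I.erase i).powerset, hk (fun i => (L i : ℝ)) p.1 S * hk (fun i => (L i : ℝ)) p.2 (I.erase i \ S) := by
  have hnpos : 0 < n := by
    rw [hn]; exact Finset.sum_pos (fun i hi => by exact_mod_cast hL i hi) hI
  have hLp : ∀ i ∈ I, (0:ℝ) < L i := fun i hi => by exact_mod_cast hL i hi
  have hg : ∀ i ∈ I, 0 < gg (L i) := fun i hi => gg_pos _ (hL i hi)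
  set N := n ^ ((I.card : ℤ) - 4) with hN
  have z1 : n ^ ((I.card : ℤ) - 3) = N * n := by
    rw [hN, ← zpow_add_one₀ hnpos.ne']; congr 1; ring
  set J : ι → ι → ℝ := fun i j => gg (L i + L j) / (gg (L i) * gg (L j)) with hJ
  have hJs : ∀ i j, J i j = J j i := by intro i j; simp only [hJ]; rw [add_comm, mul_comm]
  have T1 : ∑ i ∈ I, ∑ j ∈ I.erase i, (L i * L j : ℝ) * (ff (L i + L j) / (ff (L i) * ff (L j))) * N =
      N * ∑ i ∈ I, ∑ j ∈ I.erase i, (L i + L j) * J i j := by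
    rw [Finset.mul_sum]
    apply Finset.sum_congr rfl
    intro i hi
    rw [Finset.mul_sum]
    apply Finset.sum_congr rfl
    intro j hj
    have := hLp i hi
    have := hLp j (Finset.mem_of_mem_erase hj)
    have := hg i hi
    have := hg j (Finset.mem_of_mem_erase hj)
    simp only [hJ, ff]
    push_cast
    field_simp
  set G : ι → ι → ℝ := fun i r => L i * L r * (L i + L r) * (cc (L i) * Qs (L i) (L r)) with hG
  set F : ι → ι → ι → ℝ := fun i r t => L i * L r * L t * (L i + L r + L t) * (cc (L i) * Rs (L i) (L r) (L t)) with hF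
  have T2 : ∑ i ∈ I, (L i : ℝ) / ff (L i) * ∑ p ∈ Finset.HasAntidiagonal.antidiagonal (L i), ff p.1 * ff p.2 *
      ∑ S ∈ (I.erase i).powerset, hk (fun i => (L i : ℝ)) p.1 S * hk (fun i => (L i : ℝ)) p.2 (I.erase i \ S) =
      N * (n ^ 2 * ∑ i ∈ I, 2 * (1 - 1 / (L i : ℝ)) - 2 * n * ∑ i ∈ I, ∑ r ∈ I.erase i, G i r
        + ∑ i ∈ I, ∑ r ∈ I.erase i, ∑ t ∈ (I.erase i).erase r, F i r t) := by
    rw [Finset.mul_sum (a := n ^ 2), Finset.mul_sum (a := 2 * n), ← Finset.sum_sub_distrib,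
      ← Finset.sum_add_distrib, Finset.mul_sum]
    apply Finset.sum_congr rfl
    intro i hi
    have h1 := hLp i hi
    have h2 := hg i hi
    rw [hz_inner_sum L (I.erase i) (L i) (hL i hi) (fun j hj => hL j (Finset.mem_of_mem_erase hj)) n
      (by rw [hn, Finset.add_sum_erase I (fun i => (L i : ℝ)) hi])]
    rw [Finset.card_erase_of_mem hi, Nat.cast_sub (Finset.card_pos.mpr hI),
      show ((I.card:ℤ) - (1:ℕ) - 3) = (I.card:ℤ) - 4 by push_cast; ring, ← hN]
    have e1 : ∑ r ∈ I.erase i, G i r = L i * cc (L i) * ∑ r ∈ I.erase i, L r * (L i + L r) * Qs (L i) (L r) := by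
      rw [Finset.mul_sum]; apply Finset.sum_congr rfl; intro r hr; simp only [hG]; ring
    have e2 : ∑ r ∈ I.erase i, ∑ t ∈ (I.erase i).erase r, F i r t = L i * cc (L i) *
        ∑ r ∈ I.erase i, ∑ t ∈ (I.erase i).erase r, L r * L t * (L i + L r + L t) * Rs (L i) (L r) (L t) := by
      rw [Finset.mul_sum]; apply Finset.sum_congr rfl; intro r hr
      rw [Finset.mul_sum]; apply Finset.sum_congr rfl; intro t ht; simp only [hF]; ring
    rw [e1, e2]
    simp only [ff, cc]
    field_simp
  have TG : 2 * ∑ i ∈ I, ∑ r ∈ I.erase i, G i r =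
      ∑ i ∈ I, ∑ r ∈ I.erase i, (J i r - (2 + L i / L r + L r / L i - L i - L r)) := by
    rw [two_mul]
    conv_lhs => 
      arg 2
      rw [sym2]
    rw [← Finset.sum_add_distrib]
    apply Finset.sum_congr rfl
    intro i hi
    rw [← Finset.sum_add_distrib]
    apply Finset.sum_congr rfl
    intro r hr
    have hr' := Finset.mem_of_mem_erase hr
    have h1 := hLp i hi
    have h2 := hg i hi
    have h3 := hLp r hr'
    have h4 := hg r hr'
    have := identQ (L i) (L r) (hL i hi) (hL r hr')
    have e : G i r + G r i = L i * L r * (L i + L r) * (cc (L i) * Qs (L i) (L r) + cc (L r) * Qs (L r) (L i)) := by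
      simp only [hG]; ring
    rw [e, this]
    simp only [hJ, cc]
    field_simp
    ring
  have TF : 3 * ∑ i ∈ I, ∑ r ∈ I.erase i, ∑ t ∈ (I.erase i).erase r, F i r t =
      ∑ i ∈ I, ∑ r ∈ I.erase i, ∑ t ∈ (I.erase i).erase r,
        (-2 * (L i + L r + L t) + (L t * J i r + L r * J i t + L i * J r t)) := by
    have e1 := sym3a I F
    have e3 : ∑ i ∈ I, ∑ r ∈ I.erase i, ∑ t ∈ (I.erase i).erase r, F i r t =
      ∑ i ∈ I, ∑ r ∈ I.erase i, ∑ t ∈ (I.erase i).erase r, F t i r := by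
      rw [e1, sym3b I (fun i r t => F r i t)]
    have : (3:ℝ) = 1 + 1 + 1 := by norm_num
    rw [this, add_mul, add_mul, one_mul]
    nth_rw 2 [e1]
    nth_rw 2 [e3]
    rw [← Finset.sum_add_distrib, ← Finset.sum_add_distrib]
    apply Finset.sum_congr rfl
    intro i hi
    rw [← Finset.sum_add_distrib, ← Finset.sum_add_distrib]
    apply Finset.sum_congr rfl
    intro r hr
    rw [← Finset.sum_add_distrib, ← Finset.sum_add_distrib]
    apply Finset.sum_congr rfl
    intro t ht
    have hr' := Finset.mem_of_mem_erase hr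
    have ht' := Finset.mem_of_mem_erase (Finset.mem_of_mem_erase ht)
    have h1 := hLp i hi
    have h2 := hg i hi
    have h3 := hLp r hr'
    have h4 := hg r hr'
    have h5 := hLp t ht'
    have h6 := hg t ht'
    have := identR (L i) (L r) (L t) (hL i hi) (hL r hr') (hL t ht')
    have e : F i r t + F r i t + F t i r = L i * L r * L t * (L i + L r + L t) *
      (cc (L i) * Rs (L i) (L r) (L t) + cc (L r) * Rs (L r) (L i) (L t) + cc (L t) * Rs (L t) (L i) (L r)) := by
      simp only [hF]; ring
    rw [e, this]
    simp only [hJ, cc]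
    field_simp
  have c1 : ∀ i ∈ I, ((I.erase i).card : ℝ) = I.card - 1 := by
    intro i hi
    rw [Finset.card_erase_of_mem hi, Nat.cast_sub (Finset.card_pos.mpr hI)]; simp
  have c2 : ∀ i ∈ I, ∀ r ∈ I.erase i, (((I.erase i).erase r).card : ℝ) = I.card - 2 := by
    intro i hi r hr
    rw [Finset.card_erase_of_mem hr, Nat.cast_sub (Finset.card_pos.mpr ⟨r, hr⟩), c1 i hi]; push_cast; ring
  have s1 : ∀ i ∈ I, ∑ r ∈ I.erase i, (L r : ℝ) = n - L i := by
    intro i hi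
    rw [hn, ← Finset.add_sum_erase I (fun i => (L i : ℝ)) hi]; ring
  have s2 : ∀ i ∈ I, ∀ r ∈ I.erase i, ∑ t ∈ (I.erase i).erase r, (L t : ℝ) = n - L i - L r := by
    intro i hi r hr
    rw [← s1 i hi, ← Finset.add_sum_erase (I.erase i) (fun i => (L i : ℝ)) hr]; ring
  -- triple sums
  have U1 : ∑ i ∈ I, ∑ r ∈ I.erase i, ∑ t ∈ (I.erase i).erase r, (L i : ℝ) =
      n * (I.card - 1) * (I.card - 2) := by
    have : ∀ i ∈ I, ∑ r ∈ I.erase i, ∑ t ∈ (I.erase i).erase r, (L i : ℝ) =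
        L i * ((I.card - 1) * (I.card - 2)) := by
      intro i hi
      have : ∀ r ∈ I.erase i, ∑ t ∈ (I.erase i).erase r, (L i : ℝ) = (I.card - 2) * L i := by
        intro r hr
        rw [Finset.sum_const, nsmul_eq_mul, c2 i hi r hr]
      rw [Finset.sum_congr rfl this, Finset.sum_const, nsmul_eq_mul, c1 i hi]; ring
    rw [Finset.sum_congr rfl this, ← Finset.sum_mul, ← hn]; ring
  have U2 : ∑ i ∈ I, ∑ r ∈ I.erase i, ∑ t ∈ (I.erase i).erase r, (L r : ℝ) =
      n * (I.card - 1) * (I.card - 2) := by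
    rw [← U1, sym3a]
  have U3 : ∑ i ∈ I, ∑ r ∈ I.erase i, ∑ t ∈ (I.erase i).erase r, (L t : ℝ) =
      n * (I.card - 1) * (I.card - 2) := by
    rw [← U2, sym3b]
  have K1 : ∑ i ∈ I, ∑ r ∈ I.erase i, ∑ t ∈ (I.erase i).erase r, L t * J i r =
      ∑ i ∈ I, ∑ r ∈ I.erase i, (n * J i r - (L i + L r) * J i r) := by
    apply Finset.sum_congr rfl
    intro i hi
    apply Finset.sum_congr rfl
    intro r hr
    rw [← Finset.sum_mul, s2 i hi r hr]; ring
  have K2 : ∑ i ∈ I, ∑ r ∈ I.erase i, ∑ t ∈ (I.erase i).erase r, L r * J i t =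
      ∑ i ∈ I, ∑ r ∈ I.erase i, (n * J i r - (L i + L r) * J i r) := by
    rw [← K1, sym3b]
  have K3 : ∑ i ∈ I, ∑ r ∈ I.erase i, ∑ t ∈ (I.erase i).erase r, L i * J r t =
      ∑ i ∈ I, ∑ r ∈ I.erase i, (n * J i r - (L i + L r) * J i r) := by
    rw [← K2, sym3a]
  have KK : ∑ i ∈ I, ∑ r ∈ I.erase i, (n * J i r - (L i + L r) * J i r) =
      n * ∑ i ∈ I, ∑ r ∈ I.erase i, J i r - ∑ i ∈ I, ∑ r ∈ I.erase i, (L i + L r) * J i r := by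
    simp only [Finset.sum_sub_distrib, Finset.mul_sum]
  have SP : ∑ i ∈ I, ∑ r ∈ I.erase i, ∑ t ∈ (I.erase i).erase r,
        (-2 * (L i + L r + L t) + (L t * J i r + L r * J i t + L i * J r t)) =
      -2 * (∑ i ∈ I, ∑ r ∈ I.erase i, ∑ t ∈ (I.erase i).erase r, (L i : ℝ) +
        ∑ i ∈ I, ∑ r ∈ I.erase i, ∑ t ∈ (I.erase i).erase r, (L r : ℝ) +
        ∑ i ∈ I, ∑ r ∈ I.erase i, ∑ t ∈ (I.erase i).erase r, (L t : ℝ)) +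
      (∑ i ∈ I, ∑ r ∈ I.erase i, ∑ t ∈ (I.erase i).erase r, L t * J i r +
        ∑ i ∈ I, ∑ r ∈ I.erase i, ∑ t ∈ (I.erase i).erase r, L r * J i t +
        ∑ i ∈ I, ∑ r ∈ I.erase i, ∑ t ∈ (I.erase i).erase r, L i * J r t) := by
    simp only [mul_add, Finset.sum_add_distrib, Finset.mul_sum]
  rw [SP, U1, U2, U3, K1, K2, K3, KK] at TF
  -- double sums
  have D0 : ∑ i ∈ I, ∑ r ∈ I.erase i, (2:ℝ) = 2 * I.card * (I.card - 1) := by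
    have : ∀ i ∈ I, ∑ r ∈ I.erase i, (2:ℝ) = (I.card - 1) * 2 := by
      intro i hi
      rw [Finset.sum_const, nsmul_eq_mul, c1 i hi]
    rw [Finset.sum_congr rfl this, Finset.sum_const, nsmul_eq_mul]; ring
  have D1 : ∑ i ∈ I, ∑ r ∈ I.erase i, (L i:ℝ) = n * (I.card - 1) := by
    have : ∀ i ∈ I, ∑ r ∈ I.erase i, (L i:ℝ) = L i * (I.card - 1) := by
      intro i hi
      rw [Finset.sum_const, nsmul_eq_mul, c1 i hi]; ring
    rw [Finset.sum_congr rfl this, ← Finset.sum_mul, ← hn]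
  have D2 : ∑ i ∈ I, ∑ r ∈ I.erase i, (L r:ℝ) = n * (I.card - 1) := by
    rw [← D1, sym2]
  have D3 : ∑ i ∈ I, ∑ r ∈ I.erase i, (L r / L i:ℝ) = n * ∑ i ∈ I, 1 / (L i:ℝ) - I.card := by
    have : ∀ i ∈ I, ∑ r ∈ I.erase i, (L r / L i:ℝ) = n * (1 / L i) - 1 := by
      intro i hi
      have := hLp i hi
      rw [← Finset.sum_div, s1 i hi]; field_simp
    rw [Finset.sum_congr rfl this, Finset.sum_sub_distrib, ← Finset.mul_sum]; simp
  have D4 : ∑ i ∈ I, ∑ r ∈ I.erase i, (L i / L r:ℝ) = n * ∑ i ∈ I, 1 / (L i:ℝ) - I.card := by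
    rw [← D3, sym2]
  simp only [Finset.sum_sub_distrib, Finset.sum_add_distrib] at TG
  rw [D0, D1, D2, D3, D4] at TG
  have TP : ∑ i ∈ I, 2 * (1 - 1 / (L i : ℝ)) = 2 * I.card - 2 * ∑ i ∈ I, 1 / (L i:ℝ) := by
    rw [← Finset.mul_sum, Finset.sum_sub_distrib]; simp; ring
  rw [T1, T2, z1, TP]
  linear_combination N * n * TG - N * TF / 3


/-! ## Part 4: words and the shuffle count -/

open scoped Classical in
noncomputable def Wd {β : Type*} (A : Finset β) : ℕ → Finset (List β)
  | 0 => {[]}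
  | m + 1 => (A ×ˢ Wd A m).image (fun q => q.1 :: q.2)

lemma mem_Wd {β : Type*} (A : Finset β) (m : ℕ) (w : List β) :
    w ∈ Wd A m ↔ w.length = m ∧ ∀ p ∈ w, p ∈ A := by
  induction m generalizing w with
  | zero =>
    simp only [Wd, Finset.mem_singleton, List.length_eq_zero_iff]
    constructor
    · rintro rfl; simp
    · exact fun h => h.1
  | succ m ih =>
    simp only [Wd, Finset.mem_image, Finset.mem_product, ih]
    constructor
    · rintro ⟨⟨p, v⟩, ⟨hp, hv, hv'⟩, rfl⟩
      simp only [List.length_cons, List.mem_cons]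
      refine ⟨by simpa using hv, ?_⟩
      rintro q (rfl | hq)
      · exact hp
      · exact hv' q hq
    · rintro ⟨h1, h2⟩
      cases w with
      | nil => simp at h1
      | cons p v =>
        refine ⟨(p, v), ⟨h2 p (by simp), by simpa using h1, fun q hq => h2 q (by simp [hq])⟩, rfl⟩

open scoped Classical in
noncomputable def cnt {β : Type*} (A : Finset β) (P : List β → Prop) (m : ℕ) : ℕ :=
  ((Wd A m).filter P).card

lemma cnt_zero {β : Type*} (A : Finset β) (P : List β → Prop) (h : P []) : cnt A P 0 = 1 := by
  classical
  simp [cnt, Wd, Finset.filter_singleton, h]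

lemma cnt_zero' {β : Type*} (A : Finset β) (P : List β → Prop) (h : ¬ P []) : cnt A P 0 = 0 := by
  classical
  simp [cnt, Wd, Finset.filter_singleton, h]

lemma cnt_succ {β : Type*} (A : Finset β) (P : List β → Prop) (m : ℕ) :
    cnt A P (m + 1) = ∑ p ∈ A, cnt A (fun w => P (p :: w)) m := by
  classical
  have : (Wd A (m+1)).filter P =
      A.biUnion (fun p => ((Wd A m).filter (fun w => P (p :: w))).image (fun w => p :: w)) := by
    ext w
    simp only [Wd, Finset.mem_filter, Finset.mem_image, Finset.mem_product, Finset.mem_biUnion]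
    constructor
    · rintro ⟨⟨⟨p, v⟩, ⟨hp, hv⟩, rfl⟩, h⟩
      exact ⟨p, hp, v, ⟨hv, h⟩, rfl⟩
    · rintro ⟨p, hp, v, ⟨hv, h⟩, rfl⟩
      exact ⟨⟨(p, v), ⟨hp, hv⟩, rfl⟩, h⟩
  rw [cnt, this, Finset.card_biUnion]
  · apply Finset.sum_congr rfl
    intro p _
    rw [Finset.card_image_of_injective _ (fun a b h => by simpa using h), cnt]
  · intro p _ q _ hpq
    rw [Function.onFun, Finset.disjoint_left]
    intro w hw hw'
    simp only [Finset.mem_image] at hw hw'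
    obtain ⟨a, _, rfl⟩ := hw
    obtain ⟨b, _, h⟩ := hw'
    simp at h
    exact hpq h.1.symm

lemma cnt_congr {β : Type*} (A A' : Finset β) (P P' : List β → Prop) (m : ℕ)
    (h : ∀ w, ((∀ p ∈ w, p ∈ A) ∧ P w) ↔ ((∀ p ∈ w, p ∈ A') ∧ P' w)) : cnt A P m = cnt A' P' m := by
  classical
  rw [cnt, cnt]
  congr 1
  ext w
  simp only [Finset.mem_filter, mem_Wd, and_assoc, h w]

lemma cnt_pos {β : Type*} (A : Finset β) (P : List β → Prop) (m : ℕ) (h : cnt A P m ≠ 0) :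
    ∃ w : List β, w.length = m ∧ (∀ p ∈ w, p ∈ A) ∧ P w := by
  classical
  obtain ⟨w, hw⟩ := Finset.card_pos.mp (Nat.pos_of_ne_zero h)
  simp only [Finset.mem_filter, mem_Wd] at hw
  exact ⟨w, hw.1.1, hw.1.2, hw.2⟩

lemma cnt_shuffle {β : Type*} [DecidableEq β] (A A' : Finset β) (hd : Disjoint A A') (P Q : List β → Prop) (m : ℕ) :
    cnt (A ∪ A') (fun w => P (w.filter (· ∈ A)) ∧ Q (w.filter (· ∈ A'))) m =
    ∑ ij ∈ Finset.HasAntidiagonal.antidiagonal m, (m.choose ij.1) * (cnt A P ij.1 * cnt A' Q ij.2) := by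
  induction m generalizing P Q with
  | zero =>
    by_cases hP : P [] <;> by_cases hQ : Q [] <;>
      simp [cnt, Wd, Finset.filter_singleton, hP, hQ]
  | succ m ih =>
    have hb := Finset.sum_antidiagonal_choose_succ_mul (R := ℕ) (fun i j => cnt A P i * cnt A' Q j) m
    simp only [Nat.cast_id] at hb
    rw [hb, cnt_succ, Finset.sum_union hd, add_comm]
    congr 1
    · have : ∀ p ∈ A', cnt (A ∪ A') (fun w => P ((p :: w).filter (· ∈ A)) ∧ Q ((p :: w).filter (· ∈ A'))) m
          = ∑ ij ∈ Finset.HasAntidiagonal.antidiagonal m, (m.choose ij.1) * (cnt A P ij.1 * cnt A' (fun w => Q (p :: w)) ij.2) := by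
        intro p hp
        have hp' : p ∉ A := fun h => (Finset.disjoint_left.mp hd h hp)
        rw [← ih]
        simp [hp, hp']
      rw [Finset.sum_congr rfl this, Finset.sum_comm]
      apply Finset.sum_congr rfl
      intro ij _
      rw [cnt_succ, Finset.mul_sum, Finset.mul_sum]
    · have : ∀ p ∈ A, cnt (A ∪ A') (fun w => P ((p :: w).filter (· ∈ A)) ∧ Q ((p :: w).filter (· ∈ A'))) m
          = ∑ ij ∈ Finset.HasAntidiagonal.antidiagonal m, (m.choose ij.1) * (cnt A (fun w => P (p :: w)) ij.1 * cnt A' Q ij.2) := by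
        intro p hp
        have hp' : p ∉ A' := fun h => (Finset.disjoint_left.mp hd hp h)
        rw [← ih]
        simp [hp, hp']
      rw [Finset.sum_congr rfl this, Finset.sum_comm]
      apply Finset.sum_congr rfl
      intro ij hij
      have hij' : ij.1 + ij.2 = m := by simpa using hij
      rw [cnt_succ, Finset.sum_mul, Finset.mul_sum, ← hij', Nat.choose_symm_add]

/-! ## Part 5: connectivity -/

section
variable {α : Type*} [DecidableEq α]

def WInv (w : List (α × α)) (C : Finset α) : Prop := ∀ p ∈ w, (p.1 ∈ C ↔ p.2 ∈ C)

def Conn (w : List (α × α)) (B : Finset α) : Prop :=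
  ∀ C ⊆ B, C.Nonempty → WInv w C → C = B

def pr (w : List (α × α)) : Perm α := (w.map (fun p => swap p.1 p.2)).prod

lemma WInv.union {w : List (α × α)} {C D : Finset α} (h : WInv w C) (h' : WInv w D) : WInv w (C ∪ D) := by
  intro p hp
  simp only [Finset.mem_union, h p hp, h' p hp]

lemma WInv.inter {w : List (α × α)} {C D : Finset α} (h : WInv w C) (h' : WInv w D) : WInv w (C ∩ D) := by
  intro p hp
  simp only [Finset.mem_inter, h p hp, h' p hp]

lemma WInv.sdiff {w : List (α × α)} {C D : Finset α} (h : WInv w C) (h' : WInv w D) : WInv w (C \ D) := by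
  intro p hp
  simp only [Finset.mem_sdiff, h p hp, h' p hp]

lemma WInv_of_mem {w : List (α × α)} {B : Finset α} (h : ∀ p ∈ w, p ∈ B.offDiag) : WInv w B := by
  intro p hp
  have := h p hp
  simp only [Finset.mem_offDiag] at this
  simp [this.1, this.2.1]

lemma WInv_cons {w : List (α × α)} {x y : α} {C : Finset α} :
    WInv ((x, y) :: w) C ↔ (x ∈ C ↔ y ∈ C) ∧ WInv w C := by
  simp [WInv]

def WSep (B : Finset α) (w : List (α × α)) (C : Finset α) : Prop :=
  WInv w C ∧ Conn w C ∧ Conn w (B \ C)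

lemma conn_cons {B : Finset α} {w : List (α × α)} {x y : α} (hx : x ∈ B) (hy : y ∈ B)
    (hw : WInv w B) :
    Conn ((x, y) :: w) B ↔ Conn w B ∨ ∃ C ⊆ B, x ∈ C ∧ y ∉ C ∧ WSep B w C := by
  constructor
  · intro h
    by_contra hcon
    push Not at hcon
    obtain ⟨h1, h2⟩ := hcon
    have key : ∃ C ⊆ B, x ∈ C ∧ y ∉ C ∧ WInv w C := by
      unfold Conn at h1
      push Not at h1
      obtain ⟨C, hCB, hC, hI, hne⟩ := h1
      have hxy : ¬ (x ∈ C ↔ y ∈ C) := fun hh => hne (h C hCB hC (WInv_cons.mpr ⟨hh, hI⟩))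
      by_cases hxC : x ∈ C
      · exact ⟨C, hCB, hxC, by tauto, hI⟩
      · exact ⟨B \ C, Finset.sdiff_subset, by simp [hx, hxC], by simp; tauto, hw.sdiff hI⟩
    obtain ⟨C, hCB, hxC, hyC, hI⟩ := key
    refine h2 C hCB hxC hyC ⟨hI, ?_, ?_⟩
    · intro C' hC' hne hI'
      have hyC' : y ∉ C' := fun hh => hyC (hC' hh)
      by_cases hxC' : x ∈ C'
      · have := h (C' ∪ (B \ C)) (Finset.union_subset (hC'.trans hCB) Finset.sdiff_subset)
          ⟨x, by simp [hxC']⟩ (WInv_cons.mpr ⟨by simp [hxC', hy, hyC], hI'.union (hw.sdiff hI)⟩)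
        apply Finset.Subset.antisymm hC'
        intro z hz
        have hzB := hCB hz
        rw [← this] at hzB
        simp at hzB
        tauto
      · have := h C' (hC'.trans hCB) hne (WInv_cons.mpr ⟨by simp [hxC', hyC'], hI'⟩)
        rw [this] at hxC'
        exact absurd hx hxC'
    · intro C' hC' hne hI'
      have hxC' : x ∉ C' := fun hh => by have := hC' hh; simp [hxC] at this
      by_cases hyC' : y ∈ C'
      · have := h (C' ∪ C) (Finset.union_subset (hC'.trans Finset.sdiff_subset) hCB)
          ⟨x, by simp [hxC]⟩ (WInv_cons.mpr ⟨by simp [hxC, hyC'], hI'.union hI⟩)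
        apply Finset.Subset.antisymm hC'
        intro z hz
        simp only [Finset.mem_sdiff] at hz
        have hzB := hz.1
        rw [← this] at hzB
        simp at hzB
        tauto
      · have := h C' (hC'.trans Finset.sdiff_subset) hne (WInv_cons.mpr ⟨by simp [hxC', hyC'], hI'⟩)
        rw [this] at hxC'
        exact absurd hx hxC'
  · rintro (h | ⟨C, hCB, hxC, hyC, hI, h1, h2⟩)
    · intro C hC hne hI
      exact h C hC hne (WInv_cons.mp hI).2
    · intro C' hC' hne hI'
      obtain ⟨hxy, hI'⟩ := WInv_cons.mp hI'
      have a1 : (C' ∩ C).Nonempty → C' ∩ C = C := fun hh =>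
        h1 _ Finset.inter_subset_right hh (hI'.inter hI)
      have a2 : (C' ∩ (B \ C)).Nonempty → C' ∩ (B \ C) = B \ C := fun hh =>
        h2 _ Finset.inter_subset_right hh (hI'.inter (hw.sdiff hI))
      have b1 : C ⊆ C' → x ∈ C' := fun hh => hh hxC
      have b2 : (B \ C) ⊆ C' → y ∈ C' := fun hh => hh (by simp [hy, hyC])
      have hboth : C ⊆ C' ∧ (B \ C) ⊆ C' := by
        obtain ⟨z, hz⟩ := hne
        by_cases hzC : z ∈ C
        · have c1 := Finset.inter_eq_right.mp (a1 ⟨z, by simp [hz, hzC]⟩)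
          refine ⟨c1, Finset.inter_eq_right.mp (a2 ⟨y, ?_⟩)⟩
          simp [hy, hyC, hxy.mp (b1 c1)]
        · have c1 := Finset.inter_eq_right.mp (a2 ⟨z, by simp [hz, hzC, hC' hz]⟩)
          refine ⟨Finset.inter_eq_right.mp (a1 ⟨x, ?_⟩), c1⟩
          simp [hxC, hxy.mpr (b2 c1)]
      apply Finset.Subset.antisymm hC'
      intro z hz
      by_cases hzC : z ∈ C
      · exact hboth.1 hzC
      · exact hboth.2 (by simp [hz, hzC])

lemma sep_not_conn {B C : Finset α} {w : List (α × α)} {x y : α} (hy : y ∈ B) (hCB : C ⊆ B)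
    (hxC : x ∈ C) (hyC : y ∉ C) (h : WSep B w C) : ¬ Conn w B := by
  intro hc
  have := hc C hCB ⟨x, hxC⟩ h.1
  rw [this] at hyC
  exact hyC hy

lemma sep_unique {B C C' : Finset α} {w : List (α × α)} {x : α}
    (hxC : x ∈ C) (hxC' : x ∈ C') (h : WSep B w C) (h' : WSep B w C') : C = C' := by
  have h1 := h.2.1 (C ∩ C') Finset.inter_subset_left ⟨x, by simp [hxC, hxC']⟩ (h.1.inter h'.1)
  have h2 := h'.2.1 (C ∩ C') Finset.inter_subset_right ⟨x, by simp [hxC, hxC']⟩ (h.1.inter h'.1)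
  rw [← h1, h2]

lemma pr_cons (x y : α) (w : List (α × α)) : pr ((x, y) :: w) = swap x y * pr w := by
  simp [pr]

lemma swap_mem_of {C : Finset α} {x y z : α} (h : x ∈ C ↔ y ∈ C) (hz : z ∈ C) : swap x y z ∈ C := by
  rw [swap_apply_def]
  split_ifs with h1 h2
  · subst h1; exact h.mp hz
  · subst h2; exact h.mpr hz
  · exact hz

lemma pr_mem {w : List (α × α)} {C : Finset α} (h : WInv w C) {z : α} (hz : z ∈ C) : pr w z ∈ C := by
  induction w with
  | nil => simpa [pr] using hz
  | cons p w ih =>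
    obtain ⟨x, y⟩ := p
    obtain ⟨h1, h2⟩ := WInv_cons.mp h
    rw [pr_cons, Perm.mul_apply]
    exact swap_mem_of h1 (ih h2)

/-- letters inside `C.offDiag` or outside `C` entirely -/
lemma pr_filter {w : List (α × α)} {C : Finset α} (h : WInv w C) (hne : ∀ p ∈ w, p.1 ≠ p.2) {z : α} (hz : z ∈ C) :
    pr (w.filter (· ∈ C.offDiag)) z = pr w z := by
  induction w with
  | nil => simp
  | cons p w ih =>
    obtain ⟨x, y⟩ := p
    obtain ⟨h1, h2⟩ := WInv_cons.mp h
    have hxy : x ≠ y := hne (x, y) (by simp)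
    have ih' := ih h2 (fun p hp => hne p (by simp [hp]))
    have hm := pr_mem h2 hz
    by_cases hx : x ∈ C
    · have hy := h1.mp hx
      have : (x, y) ∈ C.offDiag := by simp [hx, hy, hxy]
      rw [List.filter_cons_of_pos (by simpa using this), pr_cons, pr_cons, Perm.mul_apply, ih', Perm.mul_apply]
    · have hy : y ∉ C := fun hh => hx (h1.mpr hh)
      have : (x, y) ∉ C.offDiag := by simp [hx]
      rw [List.filter_cons_of_neg (by simpa using this), pr_cons, ih', Perm.mul_apply,
        swap_apply_of_ne_of_ne]
      · rintro rfl; exact hx hm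
      · rintro rfl; exact hy hm

lemma conn_filter {w : List (α × α)} {C : Finset α} (h : WInv w C) (hne : ∀ p ∈ w, p.1 ≠ p.2) :
    Conn (w.filter (· ∈ C.offDiag)) C ↔ Conn w C := by
  have key : ∀ C' ⊆ C, (WInv (w.filter (· ∈ C.offDiag)) C' ↔ WInv w C') := by
    intro C' hC'
    constructor
    · intro hI p hp
      by_cases hpC : p ∈ C.offDiag
      · exact hI p (by simp only [List.mem_filter, hp, true_and]; simpa using hpC)
      · have h1 := h p hp
        have h2 := hne p hp
        simp only [Finset.mem_offDiag] at hpC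
        have a1 : p.1 ∉ C' := fun hh => hpC ⟨hC' hh, h1.mp (hC' hh), h2⟩
        have a2 : p.2 ∉ C' := fun hh => hpC ⟨h1.mpr (hC' hh), (hC' hh), h2⟩
        simp [a1, a2]
    · intro hI p hp
      exact hI p (List.mem_of_mem_filter hp)
  constructor
  · intro hc C' hC' hn hI
    exact hc C' hC' hn ((key C' hC').mpr hI)
  · intro hc C' hC' hn hI
    exact hc C' hC' hn ((key C' hC').mp hI)

def PP (B : Finset α) (σ : Perm α) (w : List (α × α)) : Prop := Conn w B ∧ ∀ z ∈ B, pr w z = σ z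

noncomputable def NN (B : Finset α) (σ : Perm α) (m : ℕ) : ℕ := cnt B.offDiag (PP B σ) m

lemma cnt_sep {B C : Finset α} (hCB : C ⊆ B) (ρ : Perm α) (m : ℕ) :
    cnt B.offDiag (fun w => WSep B w C ∧ ∀ z ∈ B, pr w z = ρ z) m =
    ∑ ij ∈ Finset.HasAntidiagonal.antidiagonal m, (m.choose ij.1) * (NN C ρ ij.1 * NN (B \ C) ρ ij.2) := by
  have hd : Disjoint C.offDiag (B \ C).offDiag := by
    rw [Finset.disjoint_left]
    intro p hp hp'
    simp only [Finset.mem_offDiag, Finset.mem_sdiff] at hp hp'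
    exact hp'.1.2 hp.1
  unfold NN
  rw [← cnt_shuffle _ _ hd]
  apply cnt_congr
  intro w
  have aux : ∀ (hw : ∀ p ∈ w, p ∈ B.offDiag) (hI : WInv w C), (WSep B w C ∧ ∀ z ∈ B, pr w z = ρ z) ↔
      (PP C ρ (w.filter (· ∈ C.offDiag)) ∧ PP (B \ C) ρ (w.filter (· ∈ (B \ C).offDiag))) := by
    intro hw hI
    have hne : ∀ p ∈ w, p.1 ≠ p.2 := fun p hp => by
      have := hw p hp; simp only [Finset.mem_offDiag] at this; exact this.2.2
    have hI' : WInv w (B \ C) := (WInv_of_mem hw).sdiff hI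
    unfold PP WSep
    rw [conn_filter hI hne, conn_filter hI' hne]
    have e1 : (∀ z ∈ C, pr (w.filter (· ∈ C.offDiag)) z = ρ z) ↔ (∀ z ∈ C, pr w z = ρ z) := by
      apply forall₂_congr; intro z hz; rw [pr_filter hI hne hz]
    have e2 : (∀ z ∈ B \ C, pr (w.filter (· ∈ (B \ C).offDiag)) z = ρ z) ↔ (∀ z ∈ B \ C, pr w z = ρ z) := by
      apply forall₂_congr; intro z hz; rw [pr_filter hI' hne hz]
    rw [e1, e2]
    have e3 : (∀ z ∈ B, pr w z = ρ z) ↔ (∀ z ∈ C, pr w z = ρ z) ∧ (∀ z ∈ B \ C, pr w z = ρ z) := by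
      constructor
      · intro h; exact ⟨fun z hz => h z (hCB hz), fun z hz => h z (Finset.mem_sdiff.mp hz).1⟩
      · rintro ⟨h1, h2⟩ z hz
        by_cases hzC : z ∈ C
        · exact h1 z hzC
        · exact h2 z (by simp [hz, hzC])
    rw [e3]
    tauto
  constructor
  · rintro ⟨hw, hS, hp⟩
    refine ⟨?_, (aux hw hS.1).mp ⟨hS, hp⟩⟩
    intro p hp
    have h1 := hw p hp
    have h2 := hS.1 p hp
    simp only [Finset.mem_offDiag, Finset.mem_union, Finset.mem_sdiff] at h1 ⊢
    tauto
  · rintro ⟨hw, h⟩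
    have hw' : ∀ p ∈ w, p ∈ B.offDiag := by
      intro p hp
      have h1 := hw p hp
      simp only [Finset.mem_offDiag, Finset.mem_union, Finset.mem_sdiff] at h1 ⊢
      rcases h1 with h1 | h1
      · exact ⟨hCB h1.1, hCB h1.2.1, h1.2.2⟩
      · exact ⟨h1.1.1, h1.2.1.1, h1.2.2⟩
    have hI : WInv w C := by
      intro p hp
      have h1 := hw p hp
      simp only [Finset.mem_offDiag, Finset.mem_union, Finset.mem_sdiff] at h1
      tauto
    exact ⟨hw', (aux hw' hI).mpr h⟩

lemma NN_succ (B : Finset α) (σ : Perm α) (m : ℕ) :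
    NN B σ (m + 1) = ∑ p ∈ B.offDiag, (NN B (swap p.1 p.2 * σ) m +
      ∑ C ∈ B.powerset.filter (fun C => p.1 ∈ C ∧ p.2 ∉ C),
        ∑ ij ∈ Finset.HasAntidiagonal.antidiagonal m, (m.choose ij.1) *
          (NN C (swap p.1 p.2 * σ) ij.1 * NN (B \ C) (swap p.1 p.2 * σ) ij.2)) := by
  classical
  unfold NN
  rw [cnt_succ]
  apply Finset.sum_congr rfl
  rintro ⟨x, y⟩ hp
  simp only [Finset.mem_offDiag] at hp
  obtain ⟨hx, hy, hxy⟩ := hp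
  simp only
  set ρ := swap x y * σ with hρ
  have e : ∀ C ∈ B.powerset.filter (fun C => x ∈ C ∧ y ∉ C),
      ∑ ij ∈ Finset.HasAntidiagonal.antidiagonal m, (m.choose ij.1) *
          (cnt C.offDiag (PP C ρ) ij.1 * cnt (B \ C).offDiag (PP (B \ C) ρ) ij.2) =
      ((Wd B.offDiag m).filter (fun w => WSep B w C ∧ ∀ z ∈ B, pr w z = ρ z)).card := by
    intro C hC
    simp only [Finset.mem_filter, Finset.mem_powerset] at hC
    have := cnt_sep hC.1 ρ m
    unfold NN at this
    rw [← this, cnt]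
    convert rfl
  rw [Finset.sum_congr rfl e, ← Finset.card_biUnion, cnt, cnt, ← Finset.card_union_of_disjoint]
  · congr 1
    ext w
    simp only [Finset.mem_filter, Finset.mem_union, Finset.mem_biUnion, mem_Wd, Finset.mem_powerset]
    have hprod : (∀ z ∈ B, pr ((x, y) :: w) z = σ z) ↔ ∀ z ∈ B, pr w z = ρ z := by
      apply forall₂_congr
      intro z hz
      rw [pr_cons, hρ, Perm.mul_apply, Perm.mul_apply]
      constructor
      · intro h; rw [← h, swap_apply_self]
      · intro h; rw [h, swap_apply_self]
    unfold PP
    rw [hprod]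
    constructor
    · rintro ⟨hw, hc, hpr⟩
      rcases (conn_cons hx hy (WInv_of_mem hw.2)).mp hc with h | ⟨C, h1, h2, h3, h4⟩
      · exact Or.inl ⟨hw, h, hpr⟩
      · exact Or.inr ⟨C, ⟨h1, h2, h3⟩, hw, h4, hpr⟩
    · rintro (⟨hw, h, hpr⟩ | ⟨C, ⟨h1, h2, h3⟩, hw, h4, hpr⟩)
      · exact ⟨hw, (conn_cons hx hy (WInv_of_mem hw.2)).mpr (Or.inl h), hpr⟩
      · exact ⟨hw, (conn_cons hx hy (WInv_of_mem hw.2)).mpr (Or.inr ⟨C, h1, h2, h3, h4⟩), hpr⟩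
  · rw [Finset.disjoint_left]
    intro w hw hw'
    simp only [Finset.mem_filter, Finset.mem_biUnion, Finset.mem_powerset] at hw hw'
    obtain ⟨C, ⟨h1, h2, h3⟩, _, h4, _⟩ := hw'
    exact sep_not_conn hy h1 h2 h3 h4 hw.2.1
  · intro C hC C' hC' hne
    rw [Function.onFun, Finset.disjoint_left]
    intro w hw hw'
    simp only [Finset.mem_filter, Finset.coe_filter, Set.mem_setOf_eq] at hw hw' hC hC'
    exact hne (sep_unique hC.2.1 hC'.2.1 hw.2.1 hw'.2.1)

lemma NN_inv {B : Finset α} {σ : Perm α} {m : ℕ} (h : NN B σ m ≠ 0) : ∀ z ∈ B, σ z ∈ B := by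
  obtain ⟨w, _, hw, _, hp⟩ := cnt_pos _ _ _ h
  intro z hz
  rw [← hp z hz]
  exact pr_mem (WInv_of_mem hw) hz

end


/-! ## Part 6: cycles -/

section
variable {α : Type*} [DecidableEq α] [Fintype α]

open scoped Classical in
noncomputable def orb (σ : Perm α) (x : α) : Finset α := Finset.univ.filter (fun y => σ.SameCycle x y)

lemma mem_orb {σ : Perm α} {x y : α} : y ∈ orb σ x ↔ σ.SameCycle x y := by
  classical
  simp [orb]

lemma self_mem_orb (σ : Perm α) (x : α) : x ∈ orb σ x := mem_orb.mpr (Perm.SameCycle.refl _ _)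

lemma orb_eq {σ : Perm α} {x y : α} (h : σ.SameCycle x y) : orb σ x = orb σ y := by
  ext z
  rw [mem_orb, mem_orb]
  exact ⟨fun h' => h.symm.trans h', fun h' => h.trans h'⟩

lemma orb_eq_iff {σ : Perm α} {x y : α} : orb σ x = orb σ y ↔ σ.SameCycle x y := by
  refine ⟨fun h => ?_, orb_eq⟩
  rw [← mem_orb, h]
  exact self_mem_orb _ _

lemma orb_disjoint {σ : Perm α} {x y : α} (h : ¬ σ.SameCycle x y) : Disjoint (orb σ x) (orb σ y) := by
  rw [Finset.disjoint_left]
  intro z h1 h2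
  exact h ((mem_orb.mp h1).trans (mem_orb.mp h2).symm)

lemma mem_of_sameCycle {σ : Perm α} {C : Finset α} (hC : ∀ z ∈ C, σ z ∈ C) {x y : α} (hx : x ∈ C)
    (h : σ.SameCycle x y) : y ∈ C := by
  obtain ⟨i, rfl⟩ := h.exists_nat_pow_eq
  clear h
  induction i with
  | zero => simpa using hx
  | succ i ih => rw [pow_succ', Perm.mul_apply]; exact hC _ ih

lemma orb_subset {σ : Perm α} {C : Finset α} (hC : ∀ z ∈ C, σ z ∈ C) {x : α} (hx : x ∈ C) : orb σ x ⊆ C :=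
  fun _ hy => mem_of_sameCycle hC hx (mem_orb.mp hy)

lemma sameCycle_nat_pow (σ : Perm α) (x : α) (i : ℕ) : σ.SameCycle x ((σ ^ i) x) :=
  ⟨i, by simp⟩

lemma orb_of {σ : Perm α} {x : α} {k : ℕ} (hk : 0 < k) (hp : (σ ^ k) x = x)
    (hinj : ∀ i < k, ∀ j < k, (σ ^ i) x = (σ ^ j) x → i = j) :
    orb σ x = (Finset.range k).image (fun j => (σ ^ j) x) ∧ (orb σ x).card = k := by
  have h1 : orb σ x = (Finset.range k).image (fun j => (σ ^ j) x) := by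
    ext y
    rw [mem_orb, Finset.mem_image]
    constructor
    · intro h
      obtain ⟨i, rfl⟩ := h.exists_nat_pow_eq
      refine ⟨i % k, by simpa using Nat.mod_lt _ hk, ?_⟩
      have : ∀ q : ℕ, ((σ ^ k) ^ q) x = x := by
        intro q
        induction q with
        | zero => simp
        | succ q ih => rw [pow_succ, Perm.mul_apply, hp, ih]
      conv_rhs => rw [← Nat.mod_add_div i k, pow_add, Perm.mul_apply, pow_mul, this]
    · rintro ⟨j, _, rfl⟩
      exact sameCycle_nat_pow _ _ _
  refine ⟨h1, ?_⟩
  rw [h1, Finset.card_image_of_injOn, Finset.card_range]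
  intro i hi j hj hij
  exact hinj i (by simpa using hi) j (by simpa using hj) hij

lemma orb_param (σ : Perm α) (x : α) : 0 < (orb σ x).card ∧ (σ ^ (orb σ x).card) x = x ∧
    (∀ i < (orb σ x).card, ∀ j < (orb σ x).card, (σ ^ i) x = (σ ^ j) x → i = j) ∧
    orb σ x = (Finset.range (orb σ x).card).image (fun j => (σ ^ j) x) := by
  have hp : 0 < Function.minimalPeriod σ x := by
    apply Function.IsPeriodicPt.minimalPeriod_pos (orderOf_pos σ)
    rw [Function.IsPeriodicPt, Function.IsFixedPt, Perm.iterate_eq_pow, pow_orderOf_eq_one]; rfl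
  have h1 : (σ ^ (Function.minimalPeriod σ x)) x = x := by
    rw [← Perm.iterate_eq_pow]; exact Function.iterate_minimalPeriod
  have h2 : ∀ i < Function.minimalPeriod σ x, ∀ j < Function.minimalPeriod σ x,
      (σ ^ i) x = (σ ^ j) x → i = j := by
    intro i hi j hj hij
    rw [← Perm.iterate_eq_pow, ← Perm.iterate_eq_pow] at hij
    exact Function.iterate_injOn_Iio_minimalPeriod hi hj hij
  obtain ⟨h3, h4⟩ := orb_of hp h1 h2
  rw [h4]
  exact ⟨hp, h1, h2, h3⟩

lemma swap_pow {σ : Perm α} {x y : α} {j : ℕ}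
    (h : ∀ i, 0 < i → i < j → (σ ^ i) x ≠ x ∧ (σ ^ i) x ≠ y) :
    ∀ i < j, ((swap x y * σ) ^ i) x = (σ ^ i) x := by
  intro i
  induction i with
  | zero => simp
  | succ i ih =>
    intro hi
    rw [pow_succ', Perm.mul_apply, ih (by omega), Perm.mul_apply, ← Perm.mul_apply σ, ← pow_succ']
    exact swap_apply_of_ne_of_ne (h _ (by omega) hi).1 (h _ (by omega) hi).2

lemma swap_pow' {σ : Perm α} {x y : α} {j : ℕ} (hj : 0 < j)
    (h : ∀ i, 0 < i → i < j → (σ ^ i) x ≠ x ∧ (σ ^ i) x ≠ y) :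
    ((swap x y * σ) ^ j) x = swap x y ((σ ^ j) x) := by
  obtain ⟨i, rfl⟩ : ∃ i, j = i + 1 := ⟨j - 1, by omega⟩
  rw [pow_succ', Perm.mul_apply, swap_pow h i (by omega), Perm.mul_apply, ← Perm.mul_apply σ, ← pow_succ']

lemma join_aux {ρ : Perm α} {x y : α} (h : ¬ ρ.SameCycle x y) :
    orb ρ x ⊆ orb (swap x y * ρ) x ∧ (swap x y * ρ).SameCycle x y := by
  obtain ⟨h1, h2, h3, h4⟩ := orb_param ρ x
  have hh : ∀ i, 0 < i → i < (orb ρ x).card → (ρ ^ i) x ≠ x ∧ (ρ ^ i) x ≠ y := by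
    intro i hi hi'
    constructor
    · intro hx
      have := h3 i hi' 0 h1 (by simpa using hx)
      omega
    · rintro rfl
      exact h (sameCycle_nat_pow _ _ _)
  constructor
  · intro z hz
    rw [h4, Finset.mem_image] at hz
    obtain ⟨i, hi, rfl⟩ := hz
    rw [← swap_pow hh i (by simpa using hi), mem_orb]
    exact sameCycle_nat_pow _ _ _
  · have := swap_pow' h1 hh
    rw [h2, swap_apply_left] at this
    conv_rhs => rw [← this]
    exact sameCycle_nat_pow _ _ _

lemma orb_inv (ρ : Perm α) (x : α) : ∀ z ∈ orb ρ x, ρ z ∈ orb ρ x := by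
  intro z hz
  rw [mem_orb] at hz ⊢
  exact hz.trans ⟨1, by simp⟩

lemma orb_join {ρ : Perm α} {x y : α} (h : ¬ ρ.SameCycle x y) :
    orb (swap x y * ρ) x = orb ρ x ∪ orb ρ y := by
  obtain ⟨h1, h2⟩ := join_aux h
  obtain ⟨h3, h4⟩ := join_aux (fun hh => h hh.symm : ¬ ρ.SameCycle y x)
  rw [swap_comm] at h3 h4
  apply Finset.Subset.antisymm
  · apply orb_subset
    · intro z hz
      rw [Perm.mul_apply]
      apply swap_mem_of
      · simp [self_mem_orb]
      · rcases Finset.mem_union.mp hz with hz | hz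
        · exact Finset.mem_union_left _ (orb_inv _ _ _ hz)
        · exact Finset.mem_union_right _ (orb_inv _ _ _ hz)
    · simp [self_mem_orb]
  · apply Finset.union_subset h1
    rw [orb_eq h2]; exact h3

lemma orb_other {ρ : Perm α} {x y z : α} (hx : ¬ ρ.SameCycle x z) (hy : ¬ ρ.SameCycle y z) :
    orb (swap x y * ρ) z = orb ρ z := by
  have key : ∀ i : ℕ, ((swap x y * ρ) ^ i) z = (ρ ^ i) z := by
    intro i
    induction i with
    | zero => simp
    | succ i ih =>
      rw [pow_succ', Perm.mul_apply, ih, Perm.mul_apply, ← Perm.mul_apply ρ, ← pow_succ']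
      have := sameCycle_nat_pow ρ z (i+1)
      apply swap_apply_of_ne_of_ne
      · intro hh; rw [hh] at this; exact hx this.symm
      · intro hh; rw [hh] at this; exact hy this.symm
  ext u
  rw [mem_orb, mem_orb]
  constructor
  · intro h
    obtain ⟨i, rfl⟩ := h.exists_nat_pow_eq
    rw [key]; exact sameCycle_nat_pow _ _ _
  · intro h
    obtain ⟨i, rfl⟩ := h.exists_nat_pow_eq
    rw [← key]; exact sameCycle_nat_pow _ _ _

lemma orb_cut {σ : Perm α} {x : α} {j : ℕ} (hj : 0 < j) (hj' : j < (orb σ x).card) :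
    (orb (swap x ((σ ^ j) x) * σ) x).card = j ∧ ¬ (swap x ((σ ^ j) x) * σ).SameCycle x ((σ ^ j) x) := by
  obtain ⟨h1, h2, h3, h4⟩ := orb_param σ x
  have hh : ∀ i, 0 < i → i < j → (σ ^ i) x ≠ x ∧ (σ ^ i) x ≠ (σ ^ j) x := by
    intro i hi hi'
    constructor
    · intro hx
      have := h3 i (by omega) 0 h1 (by simpa using hx)
      omega
    · intro hx
      have := h3 i (by omega) j hj' hx
      omega
  have e1 := swap_pow hh
  have e2 := swap_pow' hj hh
  rw [swap_apply_right] at e2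
  obtain ⟨e3, e4⟩ := orb_of hj e2 (by
    intro i hi i' hi' hii
    rw [e1 i hi, e1 i' hi'] at hii
    exact h3 i (by omega) i' (by omega) hii)
  refine ⟨e4, ?_⟩
  rw [← mem_orb, e3, Finset.mem_image]
  rintro ⟨i, hi, hi'⟩
  have hi2 : i < j := by simpa using hi
  simp only [e1 i hi2] at hi'
  have := h3 i (by omega) j hj' hi'
  omega

lemma exists_cut {σ : Perm α} {x y : α} (hxy : x ≠ y) (h : σ.SameCycle x y) :
    ∃ j, 0 < j ∧ j < (orb σ x).card ∧ y = (σ ^ j) x := by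
  obtain ⟨h1, h2, h3, h4⟩ := orb_param σ x
  have := mem_orb.mpr h
  rw [h4, Finset.mem_image] at this
  obtain ⟨j, hj, rfl⟩ := this
  refine ⟨j, ?_, by simpa using hj, rfl⟩
  rcases Nat.eq_zero_or_pos j with rfl | h
  · simp at hxy
  · exact h

lemma not_sameCycle_cut {σ : Perm α} {x y : α} (hxy : x ≠ y) (h : σ.SameCycle x y) :
    ¬ (swap x y * σ).SameCycle x y := by
  obtain ⟨j, h1, h2, rfl⟩ := exists_cut hxy h
  exact (orb_cut h1 h2).2

noncomputable def cyc (σ : Perm α) (B : Finset α) : Finset (Finset α) := B.image (orb σ)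

lemma mem_cyc {σ : Perm α} {B : Finset α} (hB : ∀ z ∈ B, σ z ∈ B) {x : α} : orb σ x ∈ cyc σ B ↔ x ∈ B := by
  rw [cyc, Finset.mem_image]
  constructor
  · rintro ⟨z, hz, h⟩
    exact mem_of_sameCycle hB hz (orb_eq_iff.mp h)
  · intro h; exact ⟨x, h, rfl⟩

lemma cyc_biUnion {σ : Perm α} {B : Finset α} (hB : ∀ z ∈ B, σ z ∈ B) : (cyc σ B).biUnion id = B := by
  ext z
  simp only [cyc, Finset.mem_biUnion, Finset.mem_image, id]
  constructor
  · rintro ⟨c, ⟨x, hx, rfl⟩, hz⟩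
    exact orb_subset hB hx hz
  · intro h; exact ⟨_, ⟨z, h, rfl⟩, self_mem_orb _ _⟩

lemma mem_biUnion_cyc {σ : Perm α} {B : Finset α} {T : Finset (Finset α)} (hT : T ⊆ cyc σ B) {z : α} :
    z ∈ T.biUnion id ↔ orb σ z ∈ T := by
  simp only [Finset.mem_biUnion, id]
  constructor
  · rintro ⟨c, hc, hz⟩
    obtain ⟨x, hx, rfl⟩ := Finset.mem_image.mp (hT hc)
    rwa [orb_eq (mem_orb.mp hz)] at hc
  · intro h; exact ⟨_, h, self_mem_orb _ _⟩

lemma biUnion_inv {σ : Perm α} {B : Finset α} {T : Finset (Finset α)} (hT : T ⊆ cyc σ B) :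
    ∀ z ∈ T.biUnion id, σ z ∈ T.biUnion id := by
  intro z hz
  rw [mem_biUnion_cyc hT] at hz ⊢
  rwa [← orb_eq (⟨1, by simp⟩ : σ.SameCycle z (σ z))]

lemma cyc_biUnion' {σ : Perm α} {B : Finset α} {T : Finset (Finset α)} (hT : T ⊆ cyc σ B) :
    cyc σ (T.biUnion id) = T := by
  ext c
  constructor
  · intro hc
    obtain ⟨x, hx, rfl⟩ := Finset.mem_image.mp hc
    exact (mem_biUnion_cyc hT).mp hx
  · intro hc
    obtain ⟨x, hx, rfl⟩ := Finset.mem_image.mp (hT hc)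
    exact Finset.mem_image.mpr ⟨x, (mem_biUnion_cyc hT).mpr hc, rfl⟩

lemma cyc_sdiff {σ : Perm α} {B C : Finset α} (hC : ∀ z ∈ C, σ z ∈ C) :
    cyc σ (B \ C) = cyc σ B \ cyc σ C := by
  ext c
  simp only [Finset.mem_sdiff]
  constructor
  · intro hc
    obtain ⟨x, hx, rfl⟩ := Finset.mem_image.mp hc
    rw [Finset.mem_sdiff] at hx
    exact ⟨Finset.mem_image_of_mem _ hx.1, fun h => hx.2 ((mem_cyc hC).mp h)⟩
  · rintro ⟨h1, h2⟩
    obtain ⟨x, hx, rfl⟩ := Finset.mem_image.mp h1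
    rw [mem_cyc hC] at h2
    exact Finset.mem_image_of_mem _ (by simp [hx, h2])

lemma cyc_mono {σ : Perm α} {B C : Finset α} (h : C ⊆ B) : cyc σ C ⊆ cyc σ B := Finset.image_subset_image h

lemma sum_cyc {σ : Perm α} {B : Finset α} (hB : ∀ z ∈ B, σ z ∈ B) (f : Finset α → ℝ) :
    ∑ x ∈ B, f (orb σ x) = ∑ c ∈ cyc σ B, (c.card : ℝ) * f c := by
  rw [Finset.sum_comp f (orb σ)]
  apply Finset.sum_congr rfl
  intro c hc
  obtain ⟨x, hx, rfl⟩ := Finset.mem_image.mp hc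
  rw [nsmul_eq_mul]
  congr 3
  ext z
  rw [Finset.mem_filter, mem_orb, orb_eq_iff]
  exact ⟨fun h => h.2.symm, fun h => ⟨mem_of_sameCycle hB hx h, h.symm⟩⟩

lemma card_cyc {σ : Perm α} {B : Finset α} (hB : ∀ z ∈ B, σ z ∈ B) :
    (B.card : ℝ) = ∑ c ∈ cyc σ B, (c.card : ℝ) := by
  have := sum_cyc hB (fun _ => 1)
  simpa using this

lemma cyc_pos {σ : Perm α} {B : Finset α} {c : Finset α} (hc : c ∈ cyc σ B) : 0 < c.card := by
  obtain ⟨x, hx, rfl⟩ := Finset.mem_image.mp hc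
  exact (orb_param σ x).1

/-- cycles under join -/
lemma cyc_join {ρ : Perm α} {B : Finset α} {x y : α} (hx : x ∈ B) (hy : y ∈ B) (h : ¬ ρ.SameCycle x y) :
    cyc (swap x y * ρ) B = insert (orb (swap x y * ρ) x) (((cyc ρ B).erase (orb ρ x)).erase (orb ρ y)) ∧
    orb (swap x y * ρ) x ∉ ((cyc ρ B).erase (orb ρ x)).erase (orb ρ y) ∧
    orb ρ x ∈ cyc ρ B ∧ orb ρ y ∈ (cyc ρ B).erase (orb ρ x) := by
  have hj := orb_join h
  refine ⟨?_, ?_, Finset.mem_image_of_mem _ hx, ?_⟩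
  · ext c
    simp only [cyc, Finset.mem_insert, Finset.mem_erase, Finset.mem_image]
    constructor
    · rintro ⟨z, hz, rfl⟩
      by_cases h1 : ρ.SameCycle x z
      · left; apply orb_eq; rw [← Perm.sameCycle_comm, ← mem_orb, hj]; simp [mem_orb.mpr h1]
      by_cases h2 : ρ.SameCycle y z
      · left; apply orb_eq; rw [← Perm.sameCycle_comm, ← mem_orb, hj]; simp [mem_orb.mpr h2]
      right
      rw [orb_other h1 h2, Ne, orb_eq_iff, Ne, orb_eq_iff]
      exact ⟨fun h => h2 h.symm, fun h => h1 h.symm, z, hz, rfl⟩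
    · rintro (rfl | ⟨h1, h2, z, hz, rfl⟩)
      · exact ⟨x, hx, rfl⟩
      · rw [Ne, orb_eq_iff] at h1 h2
        exact ⟨z, hz, orb_other (fun h => h2 h.symm) (fun h => h1 h.symm)⟩
  · intro hmem
    simp only [cyc, Finset.mem_erase, Finset.mem_image] at hmem
    obtain ⟨h1, h2, z, hz, hzz⟩ := hmem
    have : x ∈ orb ρ z := by rw [hzz]; exact self_mem_orb _ _
    rw [← hzz, Ne, orb_eq_iff] at h2
    exact h2 (mem_orb.mp this)
  · rw [Finset.mem_erase, Ne, orb_eq_iff]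
    exact ⟨fun h' => h h'.symm, Finset.mem_image_of_mem _ hy⟩

lemma card_cyc_join {ρ : Perm α} {B : Finset α} {x y : α} (hx : x ∈ B) (hy : y ∈ B) (h : ¬ ρ.SameCycle x y) :
    (cyc (swap x y * ρ) B).card + 1 = (cyc ρ B).card := by
  obtain ⟨h1, h2, h3, h4⟩ := cyc_join hx hy h
  rw [h1, Finset.card_insert_of_notMem h2, Finset.card_erase_add_one h4, Finset.card_erase_add_one h3]

lemma inv_swap {σ : Perm α} {B : Finset α} (hB : ∀ z ∈ B, σ z ∈ B) {x y : α} (hx : x ∈ B) (hy : y ∈ B) :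
    ∀ z ∈ B, (swap x y * σ) z ∈ B := by
  intro z hz
  rw [Perm.mul_apply]
  exact swap_mem_of (by simp [hx, hy]) (hB z hz)

lemma swap_swap_mul (x y : α) (σ : Perm α) : swap x y * (swap x y * σ) = σ := by
  rw [← mul_assoc, swap_mul_self, one_mul]

/-- Riemann-Hurwitz inequality -/
lemma rh_le {B : Finset α} {σ : Perm α} {m : ℕ} (hne : B.Nonempty) (h : NN B σ m ≠ 0) :
    B.card + (cyc σ B).card ≤ m + 2 := by
  induction m using Nat.strong_induction_on generalizing B σ with
  | _ m ih =>
  rcases m with _ | m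
  · obtain ⟨w, hl, hw, hc, hp⟩ := cnt_pos _ _ _ h
    obtain rfl : w = [] := List.length_eq_zero_iff.mp hl
    obtain ⟨b, hb⟩ := hne
    have := hc {b} (by simpa using hb) (by simp) (by simp [WInv])
    rw [← this]
    simp [cyc]
  · rw [NN_succ] at h
    obtain ⟨⟨x, y⟩, hp, h⟩ := Finset.exists_ne_zero_of_sum_ne_zero h
    simp only [Finset.mem_offDiag] at hp
    obtain ⟨hx, hy, hxy⟩ := hp
    simp only at h
    set ρ := swap x y * σ with hρ
    have hσ : σ = swap x y * ρ := (swap_swap_mul x y σ).symm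
    by_cases h0 : NN B ρ m = 0
    · rw [h0, zero_add] at h
      obtain ⟨C, hC, h⟩ := Finset.exists_ne_zero_of_sum_ne_zero h
      obtain ⟨ij, hij, h⟩ := Finset.exists_ne_zero_of_sum_ne_zero h
      simp only [Finset.mem_filter, Finset.mem_powerset] at hC
      have hij' : ij.1 + ij.2 = m := by simpa using hij
      obtain ⟨hCB, hxC, hyC⟩ := hC
      have h1 : NN C ρ ij.1 ≠ 0 := by rintro h0; simp [h0] at h
      have h2 : NN (B \ C) ρ ij.2 ≠ 0 := by rintro h0; simp [h0] at h
      have i1 := ih ij.1 (by omega) ⟨x, hxC⟩ h1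
      have i2 := ih ij.2 (by omega) ⟨y, by simp [hy, hyC]⟩ h2
      have hinv := NN_inv h1
      have hns : ¬ ρ.SameCycle x y := fun hh => hyC (mem_of_sameCycle hinv hxC hh)
      have := card_cyc_join hx hy hns
      rw [← hσ] at this
      rw [cyc_sdiff hinv, Finset.card_sdiff_of_subset (cyc_mono hCB), Finset.card_sdiff_of_subset hCB] at i2
      have := Finset.card_le_card hCB
      have := Finset.card_le_card (cyc_mono (σ := ρ) hCB)
      omega
    · have i := ih m (by omega) hne h0
      by_cases hs : σ.SameCycle x y
      · have := card_cyc_join hx hy (not_sameCycle_cut hxy hs)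
        rw [← hρ, ← hσ] at this
        omega
      · have := card_cyc_join hx hy hs
        rw [← hρ] at this
        omega

end


/-! ## Part 7: the main formula -/

section
variable {α : Type*} [DecidableEq α] [Fintype α]

noncomputable def FF (T : Finset (Finset α)) : ℝ :=
  (∑ c ∈ T, (c.card : ℝ)) ^ ((T.card : ℤ) - 3) * ∏ c ∈ T, ff c.card

lemma FF_insert (T : Finset (Finset α)) (a : Finset α) (ha : a ∉ T) :
    FF (insert a T) = hk (fun c : Finset α => (c.card : ℝ)) a.card T * ff a.card * ∏ c ∈ T, ff c.card := by
  rw [FF, Finset.sum_insert ha, Finset.prod_insert ha, Finset.card_insert_of_notMem ha, hk,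
    show (((T.card + 1 : ℕ) : ℤ) - 3) = (T.card : ℤ) - 2 by push_cast; ring]
  ring

lemma cut_sum {ρ : Perm α} {B : Finset α} (hB : ∀ z ∈ B, ρ z ∈ B) {x y : α} (hx : x ∈ B) (hy : y ∈ B)
    (h : ¬ ρ.SameCycle x y) (G : Finset (Finset α) → Finset (Finset α) → ℝ) :
    ∑ C ∈ (B.powerset.filter (fun C => x ∈ C ∧ y ∉ C)).filter (fun C => ∀ z ∈ C, ρ z ∈ C),
      G (cyc ρ C) (cyc ρ (B \ C)) =
    ∑ S ∈ (((cyc ρ B).erase (orb ρ x)).erase (orb ρ y)).powerset,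
      G (insert (orb ρ x) S) (insert (orb ρ y) ((((cyc ρ B).erase (orb ρ x)).erase (orb ρ y)) \ S)) := by
  have hab : orb ρ x ≠ orb ρ y := fun hh => h (orb_eq_iff.mp hh)
  have hxc := (mem_cyc hB).mpr hx
  have hyc := (mem_cyc hB).mpr hy
  symm
  apply Finset.sum_bij' (fun S _ => (insert (orb ρ x) S).biUnion id) (fun C _ => (cyc ρ C).erase (orb ρ x))
  · intro S hS
    rw [Finset.mem_powerset] at hS
    have hT : insert (orb ρ x) S ⊆ cyc ρ B := by
      apply Finset.insert_subset hxc
      exact hS.trans ((Finset.erase_subset _ _).trans (Finset.erase_subset _ _))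
    simp only [Finset.mem_filter, Finset.mem_powerset]
    refine ⟨⟨?_, ?_, ?_⟩, biUnion_inv hT⟩
    · intro z hz
      exact (mem_cyc hB).mp (hT ((mem_biUnion_cyc hT).mp hz))
    · rw [mem_biUnion_cyc hT]; simp
    · rw [mem_biUnion_cyc hT, Finset.mem_insert]
      rintro (hh | hh)
      · exact hab hh.symm
      · have := hS hh; simp at this
  · intro C hC
    simp only [Finset.mem_filter, Finset.mem_powerset] at hC
    obtain ⟨⟨hCB, hxC, hyC⟩, hinv⟩ := hC
    rw [Finset.mem_powerset]
    intro c hc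
    rw [Finset.mem_erase] at hc
    rw [Finset.mem_erase, Finset.mem_erase]
    refine ⟨?_, hc.1, cyc_mono hCB hc.2⟩
    rintro rfl
    exact hyC ((mem_cyc hinv).mp hc.2)
  · intro S hS
    rw [Finset.mem_powerset] at hS
    have hT : insert (orb ρ x) S ⊆ cyc ρ B := by
      apply Finset.insert_subset hxc
      exact hS.trans ((Finset.erase_subset _ _).trans (Finset.erase_subset _ _))
    rw [cyc_biUnion' hT, Finset.erase_insert]
    intro hh; have := hS hh; simp at this
  · intro C hC
    simp only [Finset.mem_filter, Finset.mem_powerset] at hC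
    obtain ⟨⟨hCB, hxC, hyC⟩, hinv⟩ := hC
    rw [Finset.insert_erase ((mem_cyc hinv).mpr hxC), cyc_biUnion hinv]
  · intro S hS
    rw [Finset.mem_powerset] at hS
    have hT : insert (orb ρ x) S ⊆ cyc ρ B := by
      apply Finset.insert_subset hxc
      exact hS.trans ((Finset.erase_subset _ _).trans (Finset.erase_subset _ _))
    rw [cyc_sdiff (biUnion_inv hT), cyc_biUnion' hT]
    congr 1
    have hyS : orb ρ y ∉ S := by intro hh; have := hS hh; simp at this
    ext c
    simp only [Finset.mem_insert, Finset.mem_sdiff, Finset.mem_erase]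
    by_cases hc : c = orb ρ y
    · subst hc; simp [hyc, hyS, hab.symm]
    · simp only [hc]; tauto

lemma sum_cut (σ : Perm α) (x : α) (H : ℕ → ℕ → ℝ) (h1 : ∀ b, H 0 b = 0) (h2 : ∀ a, H a 0 = 0) :
    ∑ y ∈ (orb σ x).erase x, H (orb (swap x y * σ) x).card (orb (swap x y * σ) y).card =
    ∑ p ∈ Finset.HasAntidiagonal.antidiagonal (orb σ x).card, H p.1 p.2 := by
  obtain ⟨k1, k2, k3, k4⟩ := orb_param σ x
  rw [Finset.Nat.sum_antidiagonal_eq_sum_range_succ (fun a b => H a b)]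
  have e1 : (orb σ x).erase x = (Finset.Ioo 0 (orb σ x).card).image (fun j => (σ ^ j) x) := by
    ext y
    rw [Finset.mem_erase, Finset.mem_image]
    constructor
    · rintro ⟨hy, hy'⟩
      obtain ⟨j, hj, hj', rfl⟩ := exists_cut hy.symm (mem_orb.mp hy')
      exact ⟨j, by simp [hj, hj'], rfl⟩
    · rintro ⟨j, hj, rfl⟩
      rw [Finset.mem_Ioo] at hj
      refine ⟨fun hh => ?_, mem_orb.mpr (sameCycle_nat_pow _ _ _)⟩
      have := k3 j hj.2 0 k1 (by simpa using hh)
      omega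
  rw [e1, Finset.sum_image]
  · have : ∀ j ∈ Finset.Ioo 0 (orb σ x).card,
        H (orb (swap x ((σ ^ j) x) * σ) x).card (orb (swap x ((σ ^ j) x) * σ) ((σ ^ j) x)).card =
        H j ((orb σ x).card - j) := by
      intro j hj
      rw [Finset.mem_Ioo] at hj
      obtain ⟨c1, c2⟩ := orb_cut hj.1 hj.2
      have := orb_join c2
      rw [swap_swap_mul] at this
      have hc := congrArg Finset.card this
      rw [Finset.card_union_of_disjoint (orb_disjoint c2), c1] at hc
      rw [c1]
      congr 1
      omega
    rw [Finset.sum_congr rfl this]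
    apply Finset.sum_subset
    · intro j hj; simp at hj ⊢; omega
    · intro j hj hj'
      simp at hj hj'
      rcases Nat.eq_zero_or_pos j with rfl | hpos
      · exact h1 _
      · have : (orb σ x).card - j = 0 := by have := hj' hpos; omega
        rw [this]; exact h2 _
  · intro i hi j hj hij
    simp only [Finset.coe_Ioo, Set.mem_Ioo] at hi hj
    exact k3 i hi.2 j hj.2 hij

lemma term_conv {ρ : Perm α} {B C : Finset α} {m : ℕ} (hCB : C ⊆ B) (hC : C.Nonempty) (hD : (B \ C).Nonempty)
    (hinv : ∀ z ∈ C, ρ z ∈ C) (hinvD : ∀ z ∈ B \ C, ρ z ∈ B \ C)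
    (hm : m + 4 = B.card + (cyc ρ B).card)
    (ih : ∀ m' ≤ m, ∀ E : Finset α, E.Nonempty → (∀ z ∈ E, ρ z ∈ E) → m' + 2 = E.card + (cyc ρ E).card →
      (NN E ρ m' : ℝ) = 2 ^ m' * m'.factorial * FF (cyc ρ E)) :
    ((∑ ij ∈ Finset.HasAntidiagonal.antidiagonal m, (m.choose ij.1) * (NN C ρ ij.1 * NN (B \ C) ρ ij.2) : ℕ) : ℝ) =
    2 ^ m * m.factorial * (FF (cyc ρ C) * FF (cyc ρ (B \ C))) := by
  have c1 : (cyc ρ (B \ C)).card = (cyc ρ B).card - (cyc ρ C).card := by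
    rw [cyc_sdiff hinv, Finset.card_sdiff_of_subset (cyc_mono hCB)]
  have c2 := Finset.card_sdiff_of_subset hCB
  have c3 := Finset.card_le_card hCB
  have c4 := Finset.card_le_card (cyc_mono (σ := ρ) hCB)
  have p1 : 0 < C.card := Finset.card_pos.mpr hC
  have p2 : 0 < (cyc ρ C).card := Finset.card_pos.mpr (hC.image _)
  have p3 : 0 < (B \ C).card := Finset.card_pos.mpr hD
  have p4 : 0 < (cyc ρ (B \ C)).card := Finset.card_pos.mpr (hD.image _)
  obtain ⟨m1, hm1⟩ : ∃ m1, m1 + 2 = C.card + (cyc ρ C).card := ⟨C.card + (cyc ρ C).card - 2, by omega⟩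
  obtain ⟨m2, hm2⟩ : ∃ m2, m2 + 2 = (B \ C).card + (cyc ρ (B \ C)).card :=
    ⟨(B \ C).card + (cyc ρ (B \ C)).card - 2, by omega⟩
  have hmm : m1 + m2 = m := by omega
  rw [Finset.sum_eq_single (m1, m2)]
  · push_cast
    rw [ih m1 (by omega) C hC hinv hm1, ih m2 (by omega) (B \ C) hD hinvD hm2, ← hmm, pow_add]
    have := Nat.add_choose_mul_factorial_mul_factorial m1 m2
    rw [← Nat.choose_symm_add] at this
    have : ((m1 + m2).choose m1 : ℝ) * m1.factorial * m2.factorial = (m1 + m2).factorial := by exact_mod_cast this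
    rw [← this]
    ring
  · rintro ⟨i, j⟩ hij hne
    have hij' : i + j = m := by simpa using hij
    simp only
    by_contra h0
    have h1 : NN C ρ i ≠ 0 := by rintro hh; simp [hh] at h0
    have h2 : NN (B \ C) ρ j ≠ 0 := by rintro hh; simp [hh] at h0
    have r1 := rh_le hC h1
    have r2 := rh_le hD h2
    apply hne
    ext <;> simp <;> omega
  · intro hh
    exact absurd (by simpa using hmm) hh

theorem main_formula {B : Finset α} {σ : Perm α} {m : ℕ} (hne : B.Nonempty) (hB : ∀ z ∈ B, σ z ∈ B)
    (hm : m + 2 = B.card + (cyc σ B).card) :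
    (NN B σ m : ℝ) = 2 ^ m * m.factorial * FF (cyc σ B) := by
  induction m using Nat.strong_induction_on generalizing B σ with
  | _ m ih =>
  have p1 : 0 < B.card := Finset.card_pos.mpr hne
  have p2 : 0 < (cyc σ B).card := Finset.card_pos.mpr (hne.image _)
  rcases m with _ | m
  · have hb : B.card = 1 := by omega
    obtain ⟨b, rfl⟩ := Finset.card_eq_one.mp hb
    have hfix : σ b = b := by simpa using hB b (by simp)
    have ho : orb σ b = {b} := by
      apply Finset.Subset.antisymm
      · exact orb_subset hB (by simp)
      · simp [self_mem_orb]
    rw [NN, cnt_zero]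
    · simp [cyc, FF, ho, ff, gg]
    · constructor
      · intro C hC hCn _
        exact Finset.Nonempty.subset_singleton_iff hCn |>.mp hC
      · intro z hz
        simp at hz
        subst hz
        simp [pr, hfix]
  · set I := cyc σ B with hI
    set n : ℝ := (B.card : ℝ) with hn
    have hnI : n = ∑ c ∈ I, (c.card : ℝ) := card_cyc hB
    have hnpos : 0 < n := by rw [hn]; exact_mod_cast p1
    have hfp : ∀ c ∈ I, 0 < ff c.card := fun c hc => by
      have := cyc_pos hc
      have := gg_pos _ this
      unfold ff
      positivity
    set P := ∏ c ∈ I, ff c.card with hP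
    set lc : Finset α → ℝ := fun c => (c.card : ℝ) with hlc
    set K : ℝ := 2 ^ m * m.factorial with hK
    have hjoin : ∀ x ∈ B, ∀ y ∈ B, ¬ σ.SameCycle x y →
        ((NN B (swap x y * σ) m +
          ∑ C ∈ B.powerset.filter (fun C => x ∈ C ∧ y ∉ C),
          ∑ ij ∈ Finset.HasAntidiagonal.antidiagonal m, (m.choose ij.1) *
          (NN C (swap x y * σ) ij.1 * NN (B \ C) (swap x y * σ) ij.2) : ℕ) : ℝ) =
        K * P * (ff ((orb σ x).card + (orb σ y).card) / (ff (orb σ x).card * ff (orb σ y).card) *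
          n ^ ((I.card : ℤ) - 4)) := by
      intro x hx y hy hxy
      obtain ⟨h1, h2, h3, h4⟩ := cyc_join hx hy hxy
      have hcard := card_cyc_join hx hy hxy
      rw [← hI] at hcard
      have hj := orb_join hxy
      have hs := (join_aux hxy).2
      have hinvρ := inv_swap hB hx hy
      set ρ := swap x y * σ with hρ
      have hzero : ∑ C ∈ B.powerset.filter (fun C => x ∈ C ∧ y ∉ C),
          ∑ ij ∈ Finset.HasAntidiagonal.antidiagonal m, (m.choose ij.1) *
          (NN C ρ ij.1 * NN (B \ C) ρ ij.2) = 0 := by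
        apply Finset.sum_eq_zero
        intro C hC
        simp only [Finset.mem_filter, Finset.mem_powerset] at hC
        apply Finset.sum_eq_zero
        intro ij _
        have : NN C ρ ij.1 = 0 := by
          by_contra h0
          exact hC.2.2 (mem_of_sameCycle (NN_inv h0) hC.2.1 hs)
        simp [this]
      rw [hzero, add_zero, ih m (by omega) hne hinvρ (by omega), FF, ← card_cyc hinvρ, ← hn]
      have hIc : ((cyc ρ B).card : ℤ) - 3 = (I.card : ℤ) - 4 := by
        rw [← hcard]; push_cast; ring
      rw [hIc, h1, Finset.prod_insert h2, hj, Finset.card_union_of_disjoint (orb_disjoint hxy)]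
      have hPP : P = ff (orb σ x).card * (ff (orb σ y).card *
          ∏ c ∈ ((cyc σ B).erase (orb σ x)).erase (orb σ y), ff c.card) := by
        rw [Finset.mul_prod_erase _ (fun c => ff c.card) h4, Finset.mul_prod_erase _ (fun c => ff c.card) h3]
      have f1 := hfp _ h3
      have f2 := hfp _ (Finset.mem_of_mem_erase h4)
      rw [hPP, hK]
      field_simp
    have hcut : ∀ x ∈ B, ∀ y ∈ B, x ≠ y → σ.SameCycle x y →
        ((NN B (swap x y * σ) m +
          ∑ C ∈ B.powerset.filter (fun C => x ∈ C ∧ y ∉ C),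
          ∑ ij ∈ Finset.HasAntidiagonal.antidiagonal m, (m.choose ij.1) *
          (NN C (swap x y * σ) ij.1 * NN (B \ C) (swap x y * σ) ij.2) : ℕ) : ℝ) =
        K * P / ff (orb σ x).card * (ff (orb (swap x y * σ) x).card * ff (orb (swap x y * σ) y).card *
          ∑ S ∈ (I.erase (orb σ x)).powerset, hk lc (orb (swap x y * σ) x).card S *
            hk lc (orb (swap x y * σ) y).card (I.erase (orb σ x) \ S)) := by
      intro x hx y hy hxy hs
      have hns := not_sameCycle_cut hxy hs
      have hinvρ := inv_swap hB hx hy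
      obtain ⟨h1, h2, h3, h4⟩ := cyc_join hx hy hns
      have hcard := card_cyc_join hx hy hns
      rw [swap_swap_mul] at h1 h2 hcard
      rw [← hI] at hcard
      set ρ := swap x y * σ with hρ
      have hz : NN B ρ m = 0 := by
        by_contra h0
        have := rh_le hne h0
        omega
      have hrest : I.erase (orb σ x) = ((cyc ρ B).erase (orb ρ x)).erase (orb ρ y) := by
        rw [hI, h1, Finset.erase_insert h2]
      set R := ((cyc ρ B).erase (orb ρ x)).erase (orb ρ y) with hR
      rw [hz, zero_add, Nat.cast_sum]
      have hD : ∀ C, C ⊆ B → (∀ z ∈ C, ρ z ∈ C) → ∀ z ∈ B \ C, ρ z ∈ B \ C := by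
        intro C hCB hC z hz
        rw [Finset.mem_sdiff] at hz ⊢
        refine ⟨hinvρ z hz.1, fun hh => hz.2 ?_⟩
        exact mem_of_sameCycle hC hh (Perm.SameCycle.symm ⟨1, by simp⟩)
      rw [← Finset.sum_filter_add_sum_filter_not _ (fun C => ∀ z ∈ C, ρ z ∈ C)]
      have z0 : ∑ C ∈ (B.powerset.filter (fun C => x ∈ C ∧ y ∉ C)).filter (fun C => ¬ ∀ z ∈ C, ρ z ∈ C),
          ((∑ ij ∈ Finset.HasAntidiagonal.antidiagonal m, (m.choose ij.1) *
          (NN C ρ ij.1 * NN (B \ C) ρ ij.2) : ℕ) : ℝ) = 0 := by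
        apply Finset.sum_eq_zero
        intro C hC
        rw [Finset.mem_filter] at hC
        norm_cast
        apply Finset.sum_eq_zero
        intro ij _
        have : NN C ρ ij.1 = 0 := by
          by_contra h0
          exact hC.2 (NN_inv h0)
        simp [this]
      rw [z0, add_zero]
      have z1 : ∀ C ∈ (B.powerset.filter (fun C => x ∈ C ∧ y ∉ C)).filter (fun C => ∀ z ∈ C, ρ z ∈ C),
          ((∑ ij ∈ Finset.HasAntidiagonal.antidiagonal m, (m.choose ij.1) *
          (NN C ρ ij.1 * NN (B \ C) ρ ij.2) : ℕ) : ℝ) = K * (FF (cyc ρ C) * FF (cyc ρ (B \ C))) := by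
        intro C hC
        simp only [Finset.mem_filter, Finset.mem_powerset] at hC
        obtain ⟨⟨hCB, hxC, hyC⟩, hinv⟩ := hC
        exact term_conv hCB ⟨x, hxC⟩ ⟨y, by simp [hy, hyC]⟩ hinv (hD C hCB hinv) (by omega)
          (fun m' hm' E hE hEi hE' => ih m' (by omega) hE hEi hE')
      rw [Finset.sum_congr rfl z1, ← Finset.mul_sum,
        cut_sum hinvρ hx hy hns (fun S T => FF S * FF T), ← hR, hrest]
      have hxI : orb σ x ∈ I := Finset.mem_image_of_mem _ hx
      have hPP : P = ff (orb σ x).card * ∏ c ∈ R, ff c.card := by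
        rw [← hrest, Finset.mul_prod_erase _ (fun c => ff c.card) hxI]
      have hfx := hfp _ (Finset.mem_image_of_mem _ hx : orb σ x ∈ I)
      have z2 : ∀ S ∈ R.powerset, FF (insert (orb ρ x) S) * FF (insert (orb ρ y) (R \ S)) =
          (∏ c ∈ R, ff c.card) * (ff (orb ρ x).card * ff (orb ρ y).card) *
            (hk lc (orb ρ x).card S * hk lc (orb ρ y).card (R \ S)) := by
        intro S hS
        rw [Finset.mem_powerset] at hS
        rw [FF_insert, FF_insert, ← Finset.prod_sdiff hS]
        · simp only [hlc]; ring
        · simp [hR]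
        · intro hh; have := hS hh; simp [hR] at this
      rw [Finset.sum_congr rfl z2, ← Finset.mul_sum, hPP]
      field_simp
    rw [NN_succ, Nat.cast_sum, Finset.sum_finset_product B.offDiag B (fun x => B.erase x)
      (by intro p; simp only [Finset.mem_offDiag, Finset.mem_erase]; tauto)]
    let Φ : Finset α → ℝ := (fun c : Finset α => ∑ d ∈ I.erase c, lc d * (ff (c.card + d.card) / (ff c.card * ff d.card) *
          n ^ ((I.card : ℤ) - 4)) + 1 / ff c.card * ∑ p ∈ Finset.HasAntidiagonal.antidiagonal c.card,
            ff p.1 * ff p.2 * ∑ S ∈ (I.erase c).powerset, hk lc p.1 S * hk lc p.2 (I.erase c \ S))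
    have hx : ∀ x ∈ B, ∑ y ∈ B.erase x, ((NN B (swap x y * σ) m +
          ∑ C ∈ B.powerset.filter (fun C => x ∈ C ∧ y ∉ C),
          ∑ ij ∈ Finset.HasAntidiagonal.antidiagonal m, (m.choose ij.1) *
          (NN C (swap x y * σ) ij.1 * NN (B \ C) (swap x y * σ) ij.2) : ℕ) : ℝ) =
        K * P * Φ (orb σ x) := by
      intro x hx
      have hsub := orb_subset hB hx
      have hsplit : B.erase x = (B \ orb σ x) ∪ (orb σ x).erase x := by
        ext z
        simp only [Finset.mem_erase, Finset.mem_union, Finset.mem_sdiff]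
        have : z = x → z ∈ orb σ x := by rintro rfl; exact self_mem_orb _ _
        have := @hsub z
        tauto
      have hdisj : Disjoint (B \ orb σ x) ((orb σ x).erase x) := by
        rw [Finset.disjoint_left]
        intro z h1 h2
        simp only [Finset.mem_erase, Finset.mem_sdiff] at h1 h2
        tauto
      rw [hsplit, Finset.sum_union hdisj]
      have t1 : ∀ y ∈ B \ orb σ x, _ := fun y hy =>
        hjoin x hx y (Finset.mem_sdiff.mp hy).1 (fun hh => (Finset.mem_sdiff.mp hy).2 (mem_orb.mpr hh))
      have t2 : ∀ y ∈ (orb σ x).erase x, _ := fun y hy =>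
        hcut x hx y (hsub (Finset.mem_of_mem_erase hy)) (Finset.ne_of_mem_erase hy).symm
          (mem_orb.mp (Finset.mem_of_mem_erase hy))
      rw [Finset.sum_congr rfl t1, Finset.sum_congr rfl t2, ← Finset.mul_sum, ← Finset.mul_sum]
      have hinvo : ∀ z ∈ B \ orb σ x, σ z ∈ B \ orb σ x := by
        intro z hz
        rw [Finset.mem_sdiff] at hz ⊢
        refine ⟨hB z hz.1, fun hh => hz.2 ?_⟩
        exact mem_of_sameCycle (orb_inv σ x) hh (Perm.SameCycle.symm ⟨1, by simp⟩)
      have hco : cyc σ (orb σ x) = {orb σ x} := by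
        ext c
        rw [Finset.mem_singleton]
        constructor
        · intro hc
          obtain ⟨z, hz, rfl⟩ := Finset.mem_image.mp hc
          exact (orb_eq (mem_orb.mp hz)).symm
        · rintro rfl; exact Finset.mem_image_of_mem _ (self_mem_orb _ _)
      have hce : cyc σ (B \ orb σ x) = I.erase (orb σ x) := by
        rw [cyc_sdiff (orb_inv σ x), hco, Finset.sdiff_singleton_eq_erase]
      rw [sum_cyc hinvo (fun d => ff ((orb σ x).card + d.card) / (ff (orb σ x).card * ff d.card) *
          n ^ ((I.card : ℤ) - 4)), hce]
      rw [sum_cut σ x (fun a b => ff a * ff b *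
          ∑ S ∈ (I.erase (orb σ x)).powerset, hk lc a S * hk lc b (I.erase (orb σ x) \ S))
          (by intro b; simp [ff]) (by intro b; simp [ff])]
      simp only [Φ, hlc]
      ring
    rw [Finset.sum_congr rfl hx, ← Finset.mul_sum, sum_cyc hB Φ]
    have hmas := master (fun c : Finset α => c.card) I (hne.image _) (fun c hc => cyc_pos hc) n hnI
    have e : ∑ c ∈ cyc σ B, (c.card : ℝ) * (∑ d ∈ I.erase c, lc d * (ff (c.card + d.card) / (ff c.card * ff d.card) *
          n ^ ((I.card : ℤ) - 4)) + 1 / ff c.card * ∑ p ∈ Finset.HasAntidiagonal.antidiagonal c.card,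
            ff p.1 * ff p.2 * ∑ S ∈ (I.erase c).powerset, hk lc p.1 S * hk lc p.2 (I.erase c \ S)) =
        2 * (n + I.card - 2) * n ^ ((I.card : ℤ) - 3) := by
      rw [hmas, ← Finset.sum_add_distrib]
      apply Finset.sum_congr rfl
      intro c hc
      rw [mul_add]
      congr 1
      · rw [Finset.mul_sum]
        apply Finset.sum_congr rfl
        intro d hd
        simp only [hlc]
        ring
      · rw [← mul_assoc, mul_one_div]
    change K * P * ∑ c ∈ cyc σ B, (c.card : ℝ) * (_ + _) = _
    rw [e, FF, ← hnI, ← hP]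
    have hm' : ((m : ℝ) + 1) = n + I.card - 2 := by
      have : ((m + 1 + 2 : ℕ) : ℝ) = ((B.card + I.card : ℕ) : ℝ) := by rw [hm]
      push_cast at this
      rw [hn]; linarith
    rw [← hm', hK, Nat.factorial_succ, pow_succ]
    push_cast
    ring

end


/-! ## Part 8: assembly -/

section
variable {α : Type*} [DecidableEq α] [Fintype α]

open scoped Classical in
noncomputable def Sw (α : Type*) [DecidableEq α] [Fintype α] : Finset (Perm α) :=
  Finset.univ.filter (fun t => t.IsSwap)

lemma mem_Sw (t : Perm α) : t ∈ Sw α ↔ t.IsSwap := by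
  classical
  simp [Sw]

lemma swap_eq_swap_cases {a b x y : α} (hxy : x ≠ y) (h : swap a b = swap x y) :
    (a = x ∧ b = y) ∨ (a = y ∧ b = x) := by
  have h1 : swap a b x = y := by rw [h, swap_apply_left]
  by_cases hxa : x = a
  · subst hxa
    rw [swap_apply_left] at h1
    exact Or.inl ⟨rfl, h1⟩
  · by_cases hxb : x = b
    · subst hxb
      rw [swap_apply_right] at h1
      exact Or.inr ⟨h1, rfl⟩
    · rw [swap_apply_of_ne_of_ne hxa hxb] at h1
      exact absurd h1 hxy

lemma sum_offDiag_swap (f : Perm α → ℕ) :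
    ∑ p ∈ (Finset.univ : Finset α).offDiag, f (swap p.1 p.2) = 2 * ∑ t ∈ Sw α, f t := by
  classical
  rw [← Finset.sum_fiberwise_of_maps_to (t := Sw α) (g := fun p : α × α => swap p.1 p.2), Finset.mul_sum]
  · apply Finset.sum_congr rfl
    intro t ht
    obtain ⟨x, y, hxy, rfl⟩ := (mem_Sw t).mp ht
    have : (Finset.univ : Finset α).offDiag.filter (fun p : α × α => swap p.1 p.2 = swap x y)
        = {(x, y), (y, x)} := by
      ext ⟨a, b⟩
      simp only [Finset.mem_filter, Finset.mem_offDiag, Finset.mem_univ, true_and, Finset.mem_insert,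
        Finset.mem_singleton, Prod.mk.injEq]
      constructor
      · rintro ⟨_, h⟩
        exact swap_eq_swap_cases hxy h
      · rintro (⟨rfl, rfl⟩ | ⟨rfl, rfl⟩)
        · exact ⟨hxy, rfl⟩
        · exact ⟨hxy.symm, swap_comm _ _⟩
    rw [this, Finset.sum_pair (by simp [hxy]), swap_comm y x]
    ring
  · intro p hp
    rw [mem_Sw]
    exact ⟨p.1, p.2, (Finset.mem_offDiag.mp hp).2.2, rfl⟩

lemma cnt_swap (m : ℕ) (R : List (Perm α) → Prop) :
    cnt (Finset.univ : Finset α).offDiag (fun w => R (w.map (fun p => swap p.1 p.2))) m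
      = 2 ^ m * cnt (Sw α) R m := by
  induction m generalizing R with
  | zero =>
    by_cases h : R []
    · rw [cnt_zero _ _ (by simpa using h), cnt_zero _ _ h]; simp
    · rw [cnt_zero' _ _ (by simpa using h), cnt_zero' _ _ h]; simp
  | succ m ih =>
    rw [cnt_succ, cnt_succ]
    simp only [List.map_cons]
    have : ∀ p : α × α, cnt (Finset.univ : Finset α).offDiag
        (fun w => R (swap p.1 p.2 :: w.map (fun p => swap p.1 p.2))) m
        = 2 ^ m * cnt (Sw α) (fun w => R (swap p.1 p.2 :: w)) m :=
      fun p => ih (fun w => R (swap p.1 p.2 :: w))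
    rw [Finset.sum_congr rfl (fun p _ => this p),
      sum_offDiag_swap (fun t => 2 ^ m * cnt (Sw α) (fun w => R (t :: w)) m), ← Finset.mul_sum]
    ring

lemma cnt_card (m : ℕ) (R : List (Perm α) → Prop) :
    Nat.card {τ : Fin m → Perm α // (∀ i, (τ i).IsSwap) ∧ R (List.ofFn τ)} = cnt (Sw α) R m := by
  classical
  rw [Nat.card_eq_fintype_card, Fintype.card_subtype, cnt]
  apply Finset.card_bij (fun τ _ => List.ofFn τ)
  · intro τ hτ
    simp only [Finset.mem_filter, Finset.mem_univ, true_and] at hτ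
    rw [Finset.mem_filter, mem_Wd]
    refine ⟨⟨by simp, ?_⟩, hτ.2⟩
    intro p hp
    rw [List.mem_ofFn] at hp
    obtain ⟨i, rfl⟩ := hp
    exact (mem_Sw _).mpr (hτ.1 i)
  · intro a _ b _ h
    exact List.ofFn_injective h
  · intro w hw
    rw [Finset.mem_filter, mem_Wd] at hw
    obtain ⟨⟨rfl, h1⟩, h2⟩ := hw
    refine ⟨w.get, ?_, List.ofFn_get w⟩
    simp only [Finset.mem_filter, Finset.mem_univ, true_and, List.ofFn_get]
    exact ⟨fun i => (mem_Sw _).mp (h1 _ (List.get_mem _ _)), h2⟩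

def RR (σ : Perm α) (ts : List (Perm α)) : Prop :=
  σ * ts.prod = 1 ∧ ∀ x y : α, ∃ g ∈ Subgroup.closure ({σ} ∪ {t | t ∈ ts}), g x = y

lemma RR_iff (σ : Perm α) (w : List (α × α)) :
    RR σ (w.map (fun p => swap p.1 p.2)) ↔ PP Finset.univ σ⁻¹ w := by
  classical
  unfold RR PP
  have hprod : σ * (w.map (fun p => swap p.1 p.2)).prod = 1 ↔ ∀ z ∈ (Finset.univ : Finset α), pr w z = σ⁻¹ z := by
    change σ * pr w = 1 ↔ _
    rw [mul_eq_one_iff_eq_inv', Perm.ext_iff]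
    simp
  rw [hprod, and_comm]
  refine and_congr_left (fun hp => ?_)
  have hσ : σ = (pr w)⁻¹ := by
    rw [← inv_inj, inv_inv, eq_comm]
    exact Perm.ext (fun z => hp z (Finset.mem_univ _))
  constructor
  · intro h C _ hne hC
    obtain ⟨x, hx⟩ := hne
    have hCc : WInv w Cᶜ := by
      intro p hp
      simp only [Finset.mem_compl]
      exact not_congr (hC p hp)
    have key : ∀ g ∈ Subgroup.closure ({σ} ∪ {t | t ∈ w.map (fun p => swap p.1 p.2)}),
        ∀ z, g z ∈ C ↔ z ∈ C := by
      intro g hg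
      induction hg using Subgroup.closure_induction with
      | mem g hg =>
        rcases hg with hg | hg
        · rw [Set.mem_singleton_iff] at hg
          subst hg
          have h1 : ∀ z, pr w z ∈ C ↔ z ∈ C := by
            intro z
            refine ⟨fun hz => ?_, pr_mem hC⟩
            by_contra hz'
            have := pr_mem hCc (Finset.mem_compl.mpr hz')
            exact Finset.mem_compl.mp this hz
          intro z
          rw [← h1 (g z), hσ]
          simp
        · simp only [Set.mem_setOf_eq, List.mem_map] at hg
          obtain ⟨p, hpw, rfl⟩ := hg
          intro z
          refine ⟨fun hz => ?_, swap_mem_of (hC p hpw)⟩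
          have := swap_mem_of (hC p hpw) hz
          simpa using this
      | one => simp
      | mul a b _ _ ha hb => intro z; rw [Perm.mul_apply, ha, hb]
      | inv a _ ha => intro z; rw [← ha]; simp
    ext y
    simp only [Finset.mem_univ, iff_true]
    obtain ⟨g, hg, rfl⟩ := h x y
    exact (key g hg x).mpr hx
  · intro h x y
    have := h (Finset.univ.filter (fun y => ∃ g ∈ Subgroup.closure
        ({σ} ∪ {t | t ∈ w.map (fun p => swap p.1 p.2)}), g x = y)) (Finset.subset_univ _)
        ⟨x, by simpa using ⟨1, one_mem _, rfl⟩⟩ ?_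
    · have hy := Finset.mem_univ y
      rw [← this, Finset.mem_filter] at hy
      exact hy.2
    · intro p hp
      have hs : swap p.1 p.2 ∈ Subgroup.closure ({σ} ∪ {t | t ∈ w.map (fun p => swap p.1 p.2)}) := by
        apply Subgroup.subset_closure
        right
        exact List.mem_map.mpr ⟨p, hp, rfl⟩
      rw [Finset.mem_filter, Finset.mem_filter]
      simp only [Finset.mem_univ, true_and]
      constructor
      · rintro ⟨g, hg, he⟩
        exact ⟨swap p.1 p.2 * g, mul_mem hs hg, by rw [Perm.mul_apply, he, swap_apply_left]⟩
      · rintro ⟨g, hg, he⟩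
        exact ⟨swap p.1 p.2 * g, mul_mem hs hg, by rw [Perm.mul_apply, he, swap_apply_right]⟩

lemma cyc_three {σ : Perm α} (h : σ.cycleType = {3}) :
    σ.support.card = 3 ∧ σ.support ∉ σ.supportᶜ.image (fun x => ({x} : Finset α)) ∧
    cyc σ Finset.univ = insert σ.support (σ.supportᶜ.image (fun x => ({x} : Finset α))) := by
  classical
  have hc : σ.IsCycle := by
    rw [← Perm.card_cycleType_eq_one, h]; simp
  have hcard : σ.support.card = 3 := by
    rw [← Perm.sum_cycleType, h]; simp
  have h1 : ∀ x ∈ σ.support, orb σ x = σ.support := by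
    intro x hx
    ext y
    rw [mem_orb]
    constructor
    · intro hs
      rw [Perm.mem_support] at hx ⊢
      exact fun hy => hx (hs.apply_eq_self_iff.mpr hy)
    · intro hy
      exact hc.sameCycle (Perm.mem_support.mp hx) (Perm.mem_support.mp hy)
  have h2 : ∀ x, x ∉ σ.support → orb σ x = {x} := by
    intro x hx
    rw [Perm.notMem_support] at hx
    ext y
    rw [mem_orb, Finset.mem_singleton]
    constructor
    · intro hs
      exact (hs.eq_of_left hx).symm
    · rintro rfl; exact Perm.SameCycle.refl _ _
  refine ⟨hcard, ?_, ?_⟩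
  · intro hm
    obtain ⟨x, _, hx⟩ := Finset.mem_image.mp hm
    rw [← hx] at hcard
    simp at hcard
  · ext c
    rw [cyc, Finset.mem_image, Finset.mem_insert, Finset.mem_image]
    constructor
    · rintro ⟨x, _, rfl⟩
      by_cases hx : x ∈ σ.support
      · left; exact h1 x hx
      · right; exact ⟨x, Finset.mem_compl.mpr hx, (h2 x hx).symm⟩
    · rintro (rfl | ⟨x, hx, rfl⟩)
      · obtain ⟨x, hx⟩ : σ.support.Nonempty := by rw [← Finset.card_pos]; omega
        exact ⟨x, Finset.mem_univ _, h1 x hx⟩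
      · exact ⟨x, Finset.mem_univ _, h2 x (Finset.mem_compl.mp hx)⟩

lemma NN_three {σ : Perm α} (h : σ.cycleType = {3}) {n : ℕ} (hn : 3 ≤ n) (hα : Fintype.card α = n) :
    (NN Finset.univ σ (2 * n - 4) : ℝ) =
      2 ^ (2 * n - 4) * (2 * n - 4).factorial * ((n : ℝ) ^ ((n : ℤ) - 5) * (27 / 2)) := by
  classical
  obtain ⟨h1, h2, h3⟩ := cyc_three h
  have hinj : Function.Injective (fun x : α => ({x} : Finset α)) := Finset.singleton_injective
  have hcc : σ.supportᶜ.card = n - 3 := by rw [Finset.card_compl, hα, h1]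
  have hcard : (cyc σ Finset.univ).card = n - 2 := by
    rw [h3, Finset.card_insert_of_notMem h2, Finset.card_image_of_injective _ hinj, hcc]
    omega
  have hne : (Finset.univ : Finset α).Nonempty := by
    rw [← Finset.card_pos, Finset.card_univ]; omega
  rw [main_formula hne (fun z _ => Finset.mem_univ _) (by rw [hcard, Finset.card_univ, hα]; omega), FF,
    ← card_cyc (fun z _ => Finset.mem_univ _), hcard, Finset.card_univ, hα]
  congr 2
  · congr 1
    omega
  · rw [h3, Finset.prod_insert h2, h1, Finset.prod_image (fun a _ b _ h => hinj h)]
    simp [ff, gg]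
    try norm_num [Nat.choose, Nat.centralBinom]

lemma card_three {σ : Perm α} (h : σ.cycleType = {3}) {n : ℕ} (hn : 3 ≤ n) (hα : Fintype.card α = n) :
    (cnt (Sw α) (RR σ) (2 * n - 4) : ℝ) =
      (2 * n - 4).factorial * ((n : ℝ) ^ ((n : ℤ) - 5) * (27 / 2)) := by
  have h' : σ⁻¹.cycleType = {3} := by rw [Perm.cycleType_inv, h]
  have h1 := NN_three h' hn hα
  have h2 := cnt_swap (2 * n - 4) (RR σ)
  have h3 : NN Finset.univ σ⁻¹ (2 * n - 4) = 2 ^ (2 * n - 4) * cnt (Sw α) (RR σ) (2 * n - 4) := by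
    rw [← h2, NN]
    exact cnt_congr _ _ _ _ _ (fun w => by rw [RR_iff])
  rw [h3] at h1
  push_cast at h1
  have : (2 : ℝ) ^ (2 * n - 4) ≠ 0 := by positivity
  apply mul_left_cancel₀ this
  rw [h1]; ring

end

lemma final_count (n : ℕ) (hn : 3 ≤ n) :
    (Nat.card {p : Perm (Fin n) × (Fin (2 * n - 4) → Perm (Fin n)) //
        p.1.cycleType = {3} ∧
        (∀ i, (p.2 i).IsSwap) ∧
        p.1 * (List.ofFn p.2).prod = 1 ∧
        (∀ x y : Fin n, ∃ g ∈ Subgroup.closure ({p.1} ∪ Set.range p.2),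
          g x = y)} : ℝ) =
      (2 * n.choose 3 : ℕ) * ((2 * n - 4).factorial * ((n : ℝ) ^ ((n : ℤ) - 5) * (27 / 2))) := by
  classical
  rw [Nat.card_congr (Equiv.subtypeProdEquivSigmaSubtype (fun (σ : Perm (Fin n)) (τ : Fin (2 * n - 4) → Perm (Fin n)) =>
      σ.cycleType = {3} ∧ (∀ i, (τ i).IsSwap) ∧ σ * (List.ofFn τ).prod = 1 ∧
        (∀ x y : Fin n, ∃ g ∈ Subgroup.closure ({σ} ∪ Set.range τ), g x = y))), Nat.card_sigma]
  push_cast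
  have key : ∀ σ : Perm (Fin n), ((Nat.card {τ : Fin (2 * n - 4) → Perm (Fin n) //
      σ.cycleType = {3} ∧ (∀ i, (τ i).IsSwap) ∧ σ * (List.ofFn τ).prod = 1 ∧
        (∀ x y : Fin n, ∃ g ∈ Subgroup.closure ({σ} ∪ Set.range τ), g x = y)} : ℕ) : ℝ) =
      if σ.cycleType = {3} then ((2 * n - 4).factorial * ((n : ℝ) ^ ((n : ℤ) - 5) * (27 / 2))) else 0 := by
    intro σ
    split_ifs with h
    · rw [← card_three h hn (Fintype.card_fin n), ← cnt_card]
      congr 1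
      apply Nat.card_congr
      apply Equiv.subtypeEquivRight
      intro τ
      have : Set.range τ = {t | t ∈ List.ofFn τ} := by
        ext t; simp [List.mem_ofFn]
      rw [RR, this]
      simp [h]
    · simp [h]
  rw [Finset.sum_congr rfl (fun σ _ => key σ), ← Finset.sum_filter, Finset.sum_const, nsmul_eq_mul,
    Perm.card_of_cycleType_singleton (by norm_num) (by simpa using hn)]
  simp

theorem hurwitz_number_2_1 (n : ℕ) (hn : 3 ≤ n) :
    (Nat.card {p : Perm (Fin n) × (Fin (2 * n - 4) → Perm (Fin n)) //
        p.1.cycleType = {3} ∧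
        (∀ i, (p.2 i).IsSwap) ∧
        p.1 * (List.ofFn p.2).prod = 1 ∧
        (∀ x y : Fin n, ∃ g ∈ Subgroup.closure ({p.1} ∪ Set.range p.2),
          g x = y)} : ℚ) =
      (n.factorial : ℚ) * (9 / 2) *
        (((2 * n - 4).factorial : ℚ) / ((n - 3).factorial : ℚ)) *
        (n : ℚ) ^ ((n : ℤ) - 5) := by
  have h := final_count n hn
  have hc : ((2 * n.choose 3 : ℕ) : ℝ) = (n.factorial : ℝ) / (3 * (n - 3).factorial) := by
    have h3 := Nat.choose_mul_factorial_mul_factorial hn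
    have h4 : (n.choose 3 : ℝ) * 6 * (n - 3).factorial = n.factorial := by
      rw [← h3]; push_cast; norm_num [Nat.factorial]
    have : ((n - 3).factorial : ℝ) ≠ 0 := by positivity
    rw [← h4]
    push_cast
    field_simp
    ring
  rw [hc] at h
  have h5 : (Nat.card {p : Perm (Fin n) × (Fin (2 * n - 4) → Perm (Fin n)) //
        p.1.cycleType = {3} ∧
        (∀ i, (p.2 i).IsSwap) ∧
        p.1 * (List.ofFn p.2).prod = 1 ∧
        (∀ x y : Fin n, ∃ g ∈ Subgroup.closure ({p.1} ∪ Set.range p.2),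
          g x = y)} : ℝ) =
      (n.factorial : ℝ) * (9 / 2) *
        (((2 * n - 4).factorial : ℝ) / ((n - 3).factorial : ℝ)) *
        (n : ℝ) ^ ((n : ℤ) - 5) := by
    rw [h]
    have : ((n - 3).factorial : ℝ) ≠ 0 := by positivity
    field_simp
    norm_num
  apply (Rat.cast_injective (α := ℝ))
  push_cast
  exact h5
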